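/- arXiv:2206.05173 — 2 statements merged into one kernel-verified Lean document; each statement's English description precedes it below -/
import Mathlib

section
/- Let p be a probability density on ℝ^d and let γ_ω(x) = N(x; 0, ωI) be the centered Gaussian density with covariance ωI. Then the Stam–Gross logarithmic Sobolev inequality holds: KL(p ‖ γ_ω) ≤ (ω/2) ∫ ‖∇ log(p(x)/γ_ω(x))‖² p(x) dx. -/
/-!
The logarithmic Sobolev inequality is tensorized from the line, where it follows from
one-dimensional optimal transport (the argument of Cordero-Erausquin).

On the line, write the density as `p = f γ` and let `T` be the increasing map carrying `p` to the
Gaussian density `γ`, so that `p = γ(T) T'` (`exists_transport`). Taking logarithms, bounding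
`log T' ≤ T' - 1` and completing a square gives the pointwise inequality
`p log f ≤ (p (T - x))' + (v / 2) (f' ^ 2 / f) γ`. The total derivative contributes a boundary term
which is at most `p |T|` at either end; since `(γ ∘ T)' = -T p / v` and `γ ∘ T ≥ 0`, this is
arbitrarily small along suitable points tending to `±∞` (`exists_deriv_ge`). No moment of `p` is
needed, and `lsi_line` follows.

Entropies are handled through the nonnegative integrand `ent a b = a log (a / b) - a + b`, so that
every inequality is one between `∫⁻` integrals and no integrability of sections has to be assumed.
Subadditivity of entropy on a product space (`ent_tensor`) is the chain rule together with the
joint convexity of `ent`. Induction on the dimension gives the inequality for the product Gaussian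
on `Fin d → ℝ` (`lsi_pi`). It is applied to `f = p / γ`, for which the sum over `i` of
`(∂ᵢ f) ^ 2 / f` is `f ‖∇ log f‖ ^ 2`.
-/

open MeasureTheory Real

/-- Centered Gaussian density on `ℝ^d` with covariance `ω I`. -/
noncomputable def gaussD (d : ℕ) (ω : ℝ) (x : EuclideanSpace ℝ (Fin d)) : ℝ :=
  (2 * Real.pi * ω) ^ (-(d : ℝ) / 2) * Real.exp (-‖x‖ ^ 2 / (2 * ω))

/-! ### The entropy integrand and its tensorization -/

/-- The Bregman form `a log (a / b) - a + b` of the relative entropy integrand. For `a, b > 0` it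
is nonnegative, so its `∫⁻` integral makes sense with no integrability hypothesis, and for
`b = ∫ f` its integral over a probability space is the entropy of `f`. -/
noncomputable def ent (a b : ℝ) : ℝ := a * Real.log (a / b) - a + b

/-- `ent` is the supremum over `t > 0` of functions that are linear in `(a, b)`; this is the
bound that expresses its joint convexity. -/
lemma le_ent {a b t : ℝ} (ha : 0 < a) (hb : 0 < b) (ht : 0 < t) :
    a * Real.log t - b * t + b ≤ ent a b := by
  have h1 : Real.log (b * t / a) ≤ b * t / a - 1 := Real.log_le_sub_one_of_pos (by positivity)
  have h2 : Real.log (b * t / a) = Real.log t - Real.log (a / b) := by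
    rw [Real.log_div (by positivity) ha.ne', Real.log_mul hb.ne' ht.ne',
      Real.log_div ha.ne' hb.ne']
    ring
  have h3 : a * (Real.log t - Real.log (a / b)) ≤ a * (b * t / a - 1) :=
    mul_le_mul_of_nonneg_left (h2 ▸ h1) ha.le
  have h4 : a * (b * t / a - 1) = b * t - a := by field_simp
  unfold ent
  linarith

lemma ent_nonneg {a b : ℝ} (ha : 0 < a) (hb : 0 < b) : 0 ≤ ent a b := by
  simpa using le_ent ha hb one_pos

lemma measurable_ent : Measurable (fun z : ℝ × ℝ => ent z.1 z.2) := by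
  unfold ent
  fun_prop

lemma integral_pos_of_pos {α : Type*} [MeasurableSpace α] {μ : Measure α} [IsProbabilityMeasure μ]
    {f : α → ℝ} (hf : Integrable f μ) (hpos : ∀ x, 0 < f x) : 0 < ∫ x, f x ∂μ := by
  rw [integral_pos_iff_support_of_nonneg (fun x => (hpos x).le) hf]
  have : Function.support f = Set.univ := by
    ext x; simp [(hpos x).ne']
  simp [this]

/-- Subadditivity (tensorization) of entropy for a product of two probability measures, stated
directly for upper bounds `∫⁻ A` and `∫⁻ B` of the entropies of the sections. -/
theorem ent_tensor {α β : Type*} [MeasurableSpace α] [MeasurableSpace β]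
    (μ : Measure α) (ν : Measure β) [IsProbabilityMeasure μ] [IsProbabilityMeasure ν]
    (F : α × β → ℝ) (hFm : Measurable F) (hpos : ∀ z, 0 < F z) (hint : Integrable F (μ.prod ν))
    (A B : α × β → ENNReal) (hA : Measurable A) (hB : Measurable B)
    (h1 : ∀ y, Integrable (fun x => F (x, y)) μ →
      ∫⁻ x, ENNReal.ofReal (ent (F (x, y)) (∫ x, F (x, y) ∂μ)) ∂μ ≤ ∫⁻ x, A (x, y) ∂μ)
    (h2 : ∀ x, Integrable (fun y => F (x, y)) ν →
      ∫⁻ y, ENNReal.ofReal (ent (F (x, y)) (∫ y, F (x, y) ∂ν)) ∂ν ≤ ∫⁻ y, B (x, y) ∂ν) :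
    ∫⁻ z, ENNReal.ofReal (ent (F z) (∫ z, F z ∂(μ.prod ν))) ∂(μ.prod ν) ≤
      ∫⁻ z, A z ∂(μ.prod ν) + ∫⁻ z, B z ∂(μ.prod ν) := by
  set m := ∫ z, F z ∂(μ.prod ν) with hm
  have hm0 : 0 < m := integral_pos_of_pos hint hpos
  set g : β → ℝ := fun y => ∫ x, F (x, y) ∂μ with hg
  set h : α → ℝ := fun x => ∫ y, F (x, y) ∂ν with hh
  have hhm : Measurable h := (hFm.stronglyMeasurable.integral_prod_right' (ν := ν)).measurable
  have hmh : m = ∫ x, h x ∂μ := integral_prod F hint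
  have hhint : Integrable h μ := hint.integral_prod_left
  have hentm : Measurable (fun z : α × β => ENNReal.ofReal (ent (F z) (h z.1))) :=
    (measurable_ent.comp (hFm.prodMk (hhm.comp measurable_fst))).ennreal_ofReal
  have hentm' : Measurable (fun z : α × β => ENNReal.ofReal (ent (F z) m)) :=
    (measurable_ent.comp (hFm.prodMk measurable_const)).ennreal_ofReal
  have hae1 : ∀ᵐ x ∂μ, Integrable (fun y => F (x, y)) ν := hint.prod_right_ae
  have hae2 : ∀ᵐ y ∂ν, Integrable (fun x => F (x, y)) μ := hint.prod_left_ae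
  have hhpos : ∀ᵐ x ∂μ, 0 < h x := by
    filter_upwards [hae1] with x hx using integral_pos_of_pos hx (fun y => hpos _)
  -- The chain rule for entropy, along the section at height `y`.
  have key1 : ∀ y, Integrable (fun x => F (x, y)) μ →
      ∫⁻ x, ENNReal.ofReal (ent (F (x, y)) m) ∂μ ≤
        ∫⁻ x, A (x, y) ∂μ + ENNReal.ofReal (ent (g y) m) := by
    intro y hy
    have hgy : 0 < g y := integral_pos_of_pos hy (fun x => hpos _)
    refine le_trans ?_ (add_le_add_left (h1 y hy) _)
    have hsm : Measurable fun x => ent (F (x, y)) (g y) :=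
      measurable_ent.comp ((hFm.comp measurable_prodMk_right).prodMk measurable_const)
    by_cases hfin : ∫⁻ x, ENNReal.ofReal (ent (F (x, y)) (g y)) ∂μ = ⊤
    · simp only [hg] at hfin ⊢
      rw [hfin]; simp
    have hI : Integrable (fun x => ent (F (x, y)) (g y)) μ := by
      refine ⟨hsm.aestronglyMeasurable, ?_⟩
      rw [hasFiniteIntegral_iff_ofReal (.of_forall fun x => ent_nonneg (hpos _) hgy)]
      exact lt_top_iff_ne_top.2 hfin
    have hdec : ∀ x, ent (F (x, y)) m =
        ent (F (x, y)) (g y) + (F (x, y) * Real.log (g y / m) - g y + m) := by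
      intro x
      unfold ent
      rw [Real.log_div (hpos _).ne' hm0.ne', Real.log_div (hpos _).ne' hgy.ne',
        Real.log_div hgy.ne' hm0.ne']
      ring
    have hI2 : Integrable (fun x => F (x, y) * Real.log (g y / m) - g y + m) μ :=
      ((hy.mul_const _).sub (integrable_const _)).add (integrable_const _)
    have hI3 : Integrable (fun x => ent (F (x, y)) m) μ := by
      simp only [hdec]; exact hI.add hI2
    have hval : ∫ x, (F (x, y) * Real.log (g y / m) - g y + m) ∂μ = ent (g y) m := by
      have hs : Integrable (fun x => F (x, y) * Real.log (g y / m) - g y) μ :=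
        (hy.mul_const _).sub (integrable_const _)
      rw [integral_add hs (integrable_const _),
        integral_sub (hy.mul_const _) (integrable_const _), integral_mul_const]
      simp [ent, hg]
    rw [← ofReal_integral_eq_lintegral_ofReal hI3
      (.of_forall fun x => ent_nonneg (hpos _) hm0)]
    change _ ≤ ∫⁻ x, ENNReal.ofReal (ent (F (x, y)) (g y)) ∂μ + _
    rw [← ofReal_integral_eq_lintegral_ofReal hI
      (.of_forall fun x => ent_nonneg (hpos _) hgy), ← ENNReal.ofReal_add
      (integral_nonneg fun x => ent_nonneg (hpos _) hgy) (ent_nonneg hgy hm0), ← hval,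
      ← integral_add hI hI2]
    simp only [hdec]
    exact le_rfl
  -- Joint convexity: averaging over `x` decreases `ent`.
  have key2 : ∀ y, Integrable (fun x => F (x, y)) μ →
      ENNReal.ofReal (ent (g y) m) ≤ ∫⁻ x, ENNReal.ofReal (ent (F (x, y)) (h x)) ∂μ := by
    intro y hy
    have hgy : 0 < g y := integral_pos_of_pos hy (fun x => hpos _)
    set t := g y / m with ht
    have ht0 : 0 < t := div_pos hgy hm0
    have hval : ∫ x, (F (x, y) * Real.log t - h x * t + h x) ∂μ = ent (g y) m := by
      have hs : Integrable (fun x => F (x, y) * Real.log t - h x * t) μ :=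
        (hy.mul_const _).sub (hhint.mul_const _)
      rw [integral_add hs hhint,
        integral_sub (hy.mul_const _) (hhint.mul_const _), integral_mul_const,
        integral_mul_const, ← hmh]
      change g y * Real.log t - m * t + m = ent (g y) m
      rw [ht, mul_div_cancel₀ _ hm0.ne']
      rfl
    rw [← hval]
    have hLI : Integrable (fun x => F (x, y) * Real.log t - h x * t + h x) μ :=
      ((hy.mul_const _).sub (hhint.mul_const _)).add hhint
    calc ENNReal.ofReal (∫ x, (F (x, y) * Real.log t - h x * t + h x) ∂μ)
        ≤ ENNReal.ofReal (∫ x, max (F (x, y) * Real.log t - h x * t + h x) 0 ∂μ) :=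
          ENNReal.ofReal_le_ofReal (integral_mono hLI hLI.pos_part fun x => le_max_left _ _)
      _ = ∫⁻ x, ENNReal.ofReal (max (F (x, y) * Real.log t - h x * t + h x) 0) ∂μ :=
          ofReal_integral_eq_lintegral_ofReal hLI.pos_part (.of_forall fun x => le_max_right _ _)
      _ ≤ _ := by
          refine lintegral_mono_ae ?_
          filter_upwards [hhpos] with x hx
          exact ENNReal.ofReal_le_ofReal
            (max_le (le_ent (hpos _) hx ht0) (ent_nonneg (hpos _) hx))
  calc ∫⁻ z, ENNReal.ofReal (ent (F z) m) ∂(μ.prod ν)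
      = ∫⁻ y, ∫⁻ x, ENNReal.ofReal (ent (F (x, y)) m) ∂μ ∂ν :=
        lintegral_prod_symm' _ hentm'
    _ ≤ ∫⁻ y, (∫⁻ x, A (x, y) ∂μ + ∫⁻ x, ENNReal.ofReal (ent (F (x, y)) (h x)) ∂μ) ∂ν := by
        refine lintegral_mono_ae ?_
        filter_upwards [hae2] with y hy
        exact (key1 y hy).trans (add_le_add_right (key2 y hy) _)
    _ = ∫⁻ z, A z ∂(μ.prod ν) + ∫⁻ z, ENNReal.ofReal (ent (F z) (h z.1)) ∂(μ.prod ν) := by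
        rw [lintegral_add_left hA.lintegral_prod_left', lintegral_prod_symm' _ hA,
          lintegral_prod_symm' _ hentm]
    _ ≤ _ := by
        refine add_le_add_right ?_ _
        rw [lintegral_prod _ hentm.aemeasurable, lintegral_prod _ hB.aemeasurable]
        refine lintegral_mono_ae ?_
        filter_upwards [hae1] with x hx using h2 x hx

/-! ### Monotone transport on the line -/

open Filter Topology Set in
lemma exists_cdf (p : ℝ → ℝ) (hc : Continuous p) (hpos : ∀ x, 0 < p x) (hi : Integrable p)
    (h1 : ∫ x, p x = 1) :
    ∃ F : ℝ → ℝ, (∀ x, HasDerivAt F (p x) x) ∧ StrictMono F ∧ (∀ x, F x ∈ Ioo (0 : ℝ) 1) ∧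
      ∀ c ∈ Ioo (0 : ℝ) 1, ∃ x, F x = c := by
  set F : ℝ → ℝ := fun x => ∫ t in Iic x, p t with hF
  have hd : ∀ x, HasDerivAt F (p x) x := by
    intro x
    have h : F = fun x => F 0 + ∫ t in (0 : ℝ)..x, p t := by
      funext y
      rw [← intervalIntegral.integral_Iic_sub_Iic hi.integrableOn hi.integrableOn]
      simp [hF]
    rw [h]
    exact (intervalIntegral.integral_hasDerivAt_right (hc.intervalIntegrable _ _)
      (hc.stronglyMeasurableAtFilter _ _) hc.continuousAt).const_add _
  have hmono : StrictMono F := strictMono_of_deriv_pos fun x => by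
    rw [(hd x).deriv]; exact hpos x
  have htop : Tendsto F atTop (𝓝 1) := by
    rw [← h1]
    exact (aecover_Iic tendsto_id).integral_tendsto_of_countably_generated hi
  have hbot : Tendsto F atBot (𝓝 0) := by
    have h := (aecover_Ioi (μ := volume) (tendsto_id (α := ℝ)
      (x := atBot))).integral_tendsto_of_countably_generated hi
    rw [h1] at h
    have h2 : F = fun x => 1 - ∫ t in Ioi (id x), p t := by
      funext x
      rw [← h1, ← intervalIntegral.integral_Iic_add_Ioi (b := x) hi.integrableOn hi.integrableOn]
      simp [hF]
    rw [h2]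
    simpa using h.const_sub 1
  have hcont : Continuous F := continuous_iff_continuousAt.2 fun x => (hd x).continuousAt
  refine ⟨F, hd, hmono, fun x => ⟨?_, ?_⟩, fun c hc => ?_⟩
  · exact (hmono.monotone.le_of_tendsto hbot (x - 1)).trans_lt (hmono (by linarith))
  · exact (hmono (by linarith)).trans_le (hmono.monotone.ge_of_tendsto htop (x + 1))
  · obtain ⟨a, ha⟩ := (hbot.eventually (gt_mem_nhds hc.1)).exists
    obtain ⟨b, hb⟩ := (htop.eventually (lt_mem_nhds hc.2)).exists
    exact mem_range_of_exists_le_of_exists_ge hcont ⟨a, ha.le⟩ ⟨b, hb.le⟩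

/-- The increasing rearrangement `T` carrying the density `p` to the density `q`: it solves the
one-dimensional Monge–Ampère equation `T' = p / q ∘ T`. -/
lemma exists_transport (p q : ℝ → ℝ) (hpc : Continuous p) (hp : ∀ x, 0 < p x)
    (hpi : Integrable p) (hp1 : ∫ x, p x = 1) (hqc : Continuous q) (hq : ∀ x, 0 < q x)
    (hqi : Integrable q) (hq1 : ∫ x, q x = 1) :
    ∃ T : ℝ → ℝ, ∀ x, HasDerivAt T (p x / q (T x)) x := by
  obtain ⟨F, hFd, hFm, hF01, hFs⟩ := exists_cdf p hpc hp hpi hp1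
  obtain ⟨G, hGd, hGm, hG01, hGs⟩ := exists_cdf q hqc hq hqi hq1
  choose T hT using fun x => hGs (F x) (hF01 x)
  have hTm : StrictMono T := fun x y hxy => by
    rw [← hGm.lt_iff_lt, hT, hT]; exact hFm hxy
  have hTs : Function.Surjective T := fun u => by
    obtain ⟨x, hx⟩ := hFs (G u) (hG01 u)
    exact ⟨x, hGm.injective (by rw [hT, hx])⟩
  have hTc : Continuous T := hTm.monotone.continuous_of_surjective hTs
  refine ⟨T, fun x => ?_⟩
  rw [hasDerivAt_iff_tendsto_slope]
  have h1 := (hFd x).tendsto_slope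
  have h2 : Filter.Tendsto T (nhdsWithin x {x}ᶜ) (nhdsWithin (T x) {T x}ᶜ) := by
    refine tendsto_nhdsWithin_iff.2 ⟨hTc.continuousAt.continuousWithinAt, ?_⟩
    filter_upwards [self_mem_nhdsWithin] with y hy
    exact fun h => hy (hTm.injective h)
  have h3 := ((hGd (T x)).tendsto_slope).comp h2
  refine (h1.div h3 (hq _).ne').congr' ?_
  filter_upwards [self_mem_nhdsWithin] with y hy
  have hne : T y - T x ≠ 0 := sub_ne_zero.2 fun h => hy (hTm.injective h)
  have hne2 : F y - F x ≠ 0 := sub_ne_zero.2 fun h => hy (hFm.injective h)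
  have hne3 : y - x ≠ 0 := sub_ne_zero.2 hy
  simp only [Function.comp, slope_def_field, hT, Pi.div_apply]
  field_simp

/-- A nonnegative function cannot decrease at a definite rate forever. -/
lemma exists_deriv_ge {H H' : ℝ → ℝ} (hH : ∀ x, 0 ≤ H x) (hd : ∀ x, HasDerivAt H (H' x) x)
    {ε : ℝ} (hε : 0 < ε) (n : ℝ) : ∃ b, n ≤ b ∧ -ε ≤ H' b := by
  by_contra! hcon
  have hd2 : ∀ x, HasDerivAt (fun x => H x + ε * x) (H' x + ε * 1) x := fun x =>
    (hd x).add ((hasDerivAt_id x).const_mul ε)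
  have hanti : AntitoneOn (fun x => H x + ε * x) (Set.Ici n) := by
    refine antitoneOn_of_deriv_nonpos (convex_Ici n)
      (fun x _ => (hd2 x).continuousAt.continuousWithinAt)
      (fun x _ => (hd2 x).differentiableAt.differentiableWithinAt) fun x hx => ?_
    rw [(hd2 x).deriv]
    rw [interior_Ici] at hx
    linarith [hcon x (le_of_lt hx)]
  have hle : n ≤ n + H n / ε + 1 := by
    have := div_nonneg (hH n) hε.le
    linarith
  have h := hanti (Set.self_mem_Ici) hle hle
  have h2 := hH (n + H n / ε + 1)
  have h3 : ε * (n + H n / ε + 1) = ε * n + H n + ε := by field_simp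
  simp only at h
  linarith

/-! ### The inequality on the line -/

open ProbabilityTheory in
lemma hasDerivAt_gaussianPDFReal (v : NNReal) (x : ℝ) :
    HasDerivAt (gaussianPDFReal 0 v) (-(x / v) * gaussianPDFReal 0 v x) x := by
  have h : HasDerivAt (fun x : ℝ => -(x - 0) ^ 2 / (2 * (v : ℝ))) (-(x / v)) x := by
    have := ((((hasDerivAt_id x).sub_const 0).pow 2).neg).div_const (2 * (v : ℝ))
    refine this.congr_deriv ?_
    rcases eq_or_ne (v : ℝ) 0 with h0 | h0
    · simp [h0]
    · simp; field_simp
  have h2 := (h.exp.const_mul (√(2 * π * v))⁻¹)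
  rw [gaussianPDFReal_def]
  exact h2.congr_deriv (by ring)

open ProbabilityTheory in
lemma log_gaussianPDFReal {v : NNReal} (hv : v ≠ 0) (x : ℝ) :
    Real.log (gaussianPDFReal 0 v x) = Real.log (√(2 * π * v))⁻¹ - x ^ 2 / (2 * v) := by
  have hv' : (0 : ℝ) < v := by positivity
  rw [gaussianPDFReal, Real.log_mul (by positivity) (Real.exp_pos _).ne', Real.log_exp]
  simp; ring

open ProbabilityTheory Filter Topology in
/-- The logarithmic Sobolev inequality on the line for a normalised density `f` with respect to
the Gaussian, with both sides written as Lebesgue integrals. -/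
theorem lsi_line_normalized {v : NNReal} (hv : v ≠ 0) (f f' : ℝ → ℝ)
    (hf : ∀ x, HasDerivAt f (f' x) x) (hf' : Continuous f') (hpos : ∀ x, 0 < f x)
    (hint : Integrable (fun x => f x * gaussianPDFReal 0 v x))
    (h1 : ∫ x, f x * gaussianPDFReal 0 v x = 1) :
    ∫⁻ x, ENNReal.ofReal (ent (f x) 1 * gaussianPDFReal 0 v x) ≤
      ENNReal.ofReal (v / 2) * ∫⁻ x, ENNReal.ofReal (f' x ^ 2 / f x * gaussianPDFReal 0 v x) := by
  have hv' : (0 : ℝ) < v := by positivity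
  set γ := gaussianPDFReal 0 v with hγ
  have hγd : ∀ x, HasDerivAt γ (-(x / v) * γ x) x := hasDerivAt_gaussianPDFReal v
  have hγpos : ∀ x, 0 < γ x := fun x => gaussianPDFReal_pos 0 v x hv
  have hγc : Continuous γ := continuous_iff_continuousAt.2 fun x => (hγd x).continuousAt
  have hγi : Integrable γ := integrable_gaussianPDFReal 0 v
  have hγ1 : ∫ x, γ x = 1 := integral_gaussianPDFReal_eq_one 0 hv
  have hfc : Continuous f := continuous_iff_continuousAt.2 fun x => (hf x).continuousAt
  set p : ℝ → ℝ := fun x => f x * γ x with hp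
  have hpc : Continuous p := hfc.mul hγc
  have hppos : ∀ x, 0 < p x := fun x => mul_pos (hpos x) (hγpos x)
  obtain ⟨T, hT⟩ := exists_transport p γ hpc hppos hint h1 hγc hγpos hγi hγ1
  have hTc : Continuous T := continuous_iff_continuousAt.2 fun x => (hT x).continuousAt
  set T' : ℝ → ℝ := fun x => p x / γ (T x) with hT'
  have hT'c : Continuous T' := hpc.div (hγc.comp hTc) fun x => (hγpos _).ne'
  have hT'pos : ∀ x, 0 < T' x := fun x => div_pos (hppos x) (hγpos _)
  set D : ℝ → ℝ := fun x => p x * (T x - x) with hD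
  set D' : ℝ → ℝ := fun x =>
    (f' x * γ x + f x * (-(x / v) * γ x)) * (T x - x) + p x * (T' x - 1) with hD'
  have hDd : ∀ x, HasDerivAt D (D' x) x := fun x =>
    ((hf x).mul (hγd x)).mul ((hT x).sub (hasDerivAt_id x))
  have hD'c : Continuous D' := by fun_prop
  have hHd : ∀ x, HasDerivAt (fun x => γ (T x)) (-(T x / v) * γ (T x) * T' x) x := fun x =>
    (hγd (T x)).comp x (hT x)
  have hHeq : ∀ x, -(T x / v) * γ (T x) * T' x = -(T x / v) * p x := fun x => by
    rw [hT', mul_assoc, mul_div_cancel₀ _ (hγpos _).ne']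
  simp only [hHeq] at hHd
  set K : ℝ → ℝ := fun x => f' x ^ 2 / f x * γ x with hK
  have hKc : Continuous K := ((hf'.pow 2).div hfc fun x => (hpos x).ne').mul hγc
  have hK0 : ∀ x, 0 ≤ K x := fun x =>
    mul_nonneg (div_nonneg (sq_nonneg _) (hpos x).le) (hγpos x).le
  have hptw : ∀ x, p x * Real.log (f x) ≤ D' x + v / 2 * K x := by
    intro x
    have hlog : Real.log (f x) = x ^ 2 / (2 * v) - T x ^ 2 / (2 * v) + Real.log (T' x) := by
      have e : f x = γ (T x) * T' x / γ x := by
        rw [hT', mul_div_cancel₀ _ (hγpos _).ne', hp]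
        field_simp [(hγpos x).ne']
      rw [e, Real.log_div (mul_pos (hγpos _) (hT'pos _)).ne' (hγpos x).ne',
        Real.log_mul (hγpos _).ne' (hT'pos _).ne', hγ, log_gaussianPDFReal hv,
        log_gaussianPDFReal hv]
      ring
    have hlT := Real.log_le_sub_one_of_pos (hT'pos x)
    have hle : p x * Real.log (f x) ≤
        p x * (x ^ 2 / (2 * v) - T x ^ 2 / (2 * v) + (T' x - 1)) := by
      rw [hlog]
      exact mul_le_mul_of_nonneg_left (by linarith) (hppos x).le
    refine hle.trans ?_
    -- The defect is a perfect square.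
    have hsq : D' x + v / 2 * K x -
        p x * (x ^ 2 / (2 * v) - T x ^ 2 / (2 * v) + (T' x - 1)) =
        γ x / (2 * v * f x) * (f x * (T x - x) + v * f' x) ^ 2 := by
      simp only [hD', hK, hp]
      field_simp [(hpos x).ne']
      ring
    have : 0 ≤ γ x / (2 * v * f x) * (f x * (T x - x) + v * f' x) ^ 2 :=
      mul_nonneg (div_nonneg (hγpos x).le
        (mul_nonneg (mul_nonneg zero_le_two hv'.le) (hpos x).le)) (sq_nonneg _)
    linarith
  by_cases hfin : ∫⁻ x, ENNReal.ofReal (K x) = ⊤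
  · rw [hfin, ENNReal.mul_top (by simpa using hv.bot_lt)]
    exact le_top
  have hKi : Integrable K := by
    refine ⟨hKc.aestronglyMeasurable, ?_⟩
    rw [hasFiniteIntegral_iff_ofReal (.of_forall hK0)]
    exact lt_top_iff_ne_top.2 hfin
  rw [← ofReal_integral_eq_lintegral_ofReal hKi (.of_forall hK0),
    ← ENNReal.ofReal_mul (by positivity)]
  -- Truncation points at which the boundary terms of the integration by parts are negligible.
  have hb : ∀ n : ℕ, ∃ b : ℝ, (n : ℝ) ≤ b ∧ D b ≤ v * (1 / ((n : ℝ) + 1)) := by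
    intro n
    obtain ⟨b, hnb, hb⟩ := exists_deriv_ge (fun x => (hγpos (T x)).le) hHd
      (ε := 1 / ((n : ℝ) + 1)) (by positivity) n
    refine ⟨b, hnb, ?_⟩
    have hb0 : 0 ≤ b := (Nat.cast_nonneg n).trans hnb
    have e : T b / v * p b ≤ 1 / ((n : ℝ) + 1) := by linarith
    have e2 : p b * T b = v * (T b / v * p b) := by field_simp
    have e3 := mul_le_mul_of_nonneg_left e hv'.le
    have e4 : 0 ≤ p b * b := mul_nonneg (hppos b).le hb0
    simp only [hD]
    linarith
  have ha : ∀ n : ℕ, ∃ a : ℝ, a ≤ -(n : ℝ) ∧ -D a ≤ v * (1 / ((n : ℝ) + 1)) := by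
    intro n
    have hHd2 : ∀ x, HasDerivAt (fun x => γ (T (-x))) (T (-x) / v * p (-x)) x := fun x =>
      ((hHd (-x)).comp x (hasDerivAt_neg x)).congr_deriv (by ring)
    obtain ⟨b, hnb, hb⟩ := exists_deriv_ge (fun x => (hγpos (T (-x))).le) hHd2
      (ε := 1 / ((n : ℝ) + 1)) (by positivity) n
    refine ⟨-b, by linarith, ?_⟩
    have hb0 : 0 ≤ b := (Nat.cast_nonneg n).trans hnb
    have e : -(T (-b) / v * p (-b)) ≤ 1 / ((n : ℝ) + 1) := by linarith
    have e2 : p (-b) * T (-b) = v * (T (-b) / v * p (-b)) := by field_simp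
    have e3 := mul_le_mul_of_nonneg_left e hv'.le
    have e4 : 0 ≤ p (-b) * b := mul_nonneg (hppos (-b)).le hb0
    simp only [hD]
    linarith
  choose b hbn hbD using hb
  choose a han haD using ha
  have hbt : Tendsto b atTop atTop := tendsto_atTop_mono hbn tendsto_natCast_atTop_atTop
  have hat : Tendsto a atTop atBot :=
    tendsto_atBot_mono han (tendsto_neg_atTop_atBot.comp tendsto_natCast_atTop_atTop)
  have hab : ∀ n, a n ≤ b n := fun n => by
    have := (Nat.cast_nonneg n : (0 : ℝ) ≤ n)
    linarith [han n, hbn n]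
  have hEc : Continuous fun x => ent (f x) 1 * γ x := by
    have : Continuous fun x => Real.log (f x) := hfc.log fun x => (hpos x).ne'
    unfold ent
    simp only [div_one]
    fun_prop
  have hE0 : ∀ x, 0 ≤ ent (f x) 1 * γ x := fun x =>
    mul_nonneg (ent_nonneg (hpos x) one_pos) (hγpos x).le
  have hI : ∀ n, ∫⁻ x in Set.Ioc (a n) (b n), ENNReal.ofReal (ent (f x) 1 * γ x) ≤
      ENNReal.ofReal (v / 2 * (∫ x, K x) + 2 * v * (1 / ((n : ℝ) + 1)) +
        (1 - ∫ x in (a n)..(b n), p x)) := by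
    intro n
    rw [← ofReal_integral_eq_lintegral_ofReal
      ((hEc.integrableOn_Icc).mono_set Set.Ioc_subset_Icc_self) (.of_forall hE0),
      ← intervalIntegral.integral_of_le (hab n)]
    refine ENNReal.ofReal_le_ofReal ?_
    have s1 : ∫ x in (a n)..(b n), ent (f x) 1 * γ x ≤
        ∫ x in (a n)..(b n), (D' x + v / 2 * K x - p x + γ x) := by
      refine intervalIntegral.integral_mono_on (hab n) (hEc.intervalIntegrable _ _)
        (Continuous.intervalIntegrable (by fun_prop) _ _) fun x _ => ?_
      have := hptw x
      simp only [ent, div_one, hp] at this ⊢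
      linarith
    have s2 : ∫ x in (a n)..(b n), (D' x + v / 2 * K x - p x + γ x) =
        (D (b n) - D (a n)) + v / 2 * (∫ x in (a n)..(b n), K x) -
          (∫ x in (a n)..(b n), p x) + ∫ x in (a n)..(b n), γ x := by
      rw [intervalIntegral.integral_add (Continuous.intervalIntegrable (by fun_prop) _ _)
          (hγc.intervalIntegrable _ _),
        intervalIntegral.integral_sub (Continuous.intervalIntegrable (by fun_prop) _ _)
          (hpc.intervalIntegrable _ _),
        intervalIntegral.integral_add (hD'c.intervalIntegrable _ _)
          (Continuous.intervalIntegrable (by fun_prop) _ _),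
        intervalIntegral.integral_const_mul,
        intervalIntegral.integral_eq_sub_of_hasDerivAt (fun x _ => hDd x)
          (hD'c.intervalIntegrable _ _)]
    have s3 : ∫ x in (a n)..(b n), K x ≤ ∫ x, K x := by
      rw [intervalIntegral.integral_of_le (hab n)]
      exact setIntegral_le_integral hKi (.of_forall hK0)
    have s4 : ∫ x in (a n)..(b n), γ x ≤ 1 := by
      rw [intervalIntegral.integral_of_le (hab n), ← hγ1]
      exact setIntegral_le_integral hγi (.of_forall fun x => (hγpos x).le)
    have s5 := mul_le_mul_of_nonneg_left s3 (half_pos hv').le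
    linarith [hbD n, haD n]
  have hL := (aecover_Ioc (μ := volume) hat hbt).lintegral_tendsto_of_countably_generated
    (f := fun x => ENNReal.ofReal (ent (f x) 1 * γ x)) hEc.measurable.ennreal_ofReal.aemeasurable
  refine le_of_tendsto_of_tendsto' hL ?_ hI
  refine ENNReal.tendsto_ofReal ?_
  have hp1 : Tendsto (fun n => ∫ x in (a n)..(b n), p x) atTop (𝓝 1) := by
    rw [← h1]; exact intervalIntegral_tendsto_integral hint hat hbt
  have := ((tendsto_one_div_add_atTop_nhds_zero_nat (𝕜 := ℝ)).const_mul (2 * (v : ℝ)))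
  simpa using (this.const_add (v / 2 * ∫ x, K x)).add (hp1.const_sub 1)

open ProbabilityTheory in
lemma lintegral_gaussianReal {v : NNReal} (hv : v ≠ 0) {f : ℝ → ℝ} (hf : Measurable f)
    (h0 : ∀ x, 0 ≤ f x) :
    ∫⁻ x, ENNReal.ofReal (f x) ∂(gaussianReal 0 v) =
      ∫⁻ x, ENNReal.ofReal (f x * gaussianPDFReal 0 v x) := by
  rw [gaussianReal_of_var_ne_zero _ hv, lintegral_withDensity_eq_lintegral_mul _
    (measurable_gaussianPDF _ _) hf.ennreal_ofReal]
  refine lintegral_congr fun x => ?_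
  rw [Pi.mul_apply, gaussianPDF, mul_comm, ENNReal.ofReal_mul (h0 x)]

open ProbabilityTheory in
theorem lsi_line {v : NNReal} (hv : v ≠ 0) (f f' : ℝ → ℝ)
    (hf : ∀ x, HasDerivAt f (f' x) x) (hf' : Continuous f') (hpos : ∀ x, 0 < f x)
    (hint : Integrable f (gaussianReal 0 v)) :
    ∫⁻ x, ENNReal.ofReal (ent (f x) (∫ x, f x ∂(gaussianReal 0 v))) ∂(gaussianReal 0 v) ≤
      ENNReal.ofReal (v / 2) * ∫⁻ x, ENNReal.ofReal (f' x ^ 2 / f x) ∂(gaussianReal 0 v) := by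
  set m := ∫ x, f x ∂(gaussianReal 0 v) with hm
  have hm0 : 0 < m := integral_pos_of_pos hint hpos
  have hfc : Continuous f := continuous_iff_continuousAt.2 fun x => (hf x).continuousAt
  have hfm := hfc.measurable
  have hint' : Integrable (fun x => f x * gaussianPDFReal 0 v x) := by
    rw [gaussianReal_of_var_ne_zero _ hv, integrable_withDensity_iff (measurable_gaussianPDF _ _)
      (.of_forall fun x => gaussianPDF_lt_top)] at hint
    simpa using hint
  have hm' : ∫ x, f x * gaussianPDFReal 0 v x = m := by
    rw [hm, integral_gaussianReal_eq_integral_smul hv]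
    simp [mul_comm]
  have hmul : ∀ x, f x / m * gaussianPDFReal 0 v x = f x * gaussianPDFReal 0 v x / m :=
    fun x => by ring
  have key := lsi_line_normalized hv (fun x => f x / m) (fun x => f' x / m)
    (fun x => (hf x).div_const m) (hf'.div_const m) (fun x => div_pos (hpos x) hm0)
    (by simp only [hmul]; exact hint'.div_const m)
    (by simp only [hmul]; rw [integral_div, hm', div_self hm0.ne'])
  have e1 : ∀ x, ent (f x) m = m * ent (f x / m) 1 := fun x => by
    simp only [ent, div_one]; field_simp
  have e2 : ∀ x, f' x ^ 2 / f x = m * ((f' x / m) ^ 2 / (f x / m)) := fun x => by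
    have := (hpos x).ne'
    field_simp
  simp only [e1, e2, ENNReal.ofReal_mul hm0.le]
  rw [lintegral_const_mul' _ _ ENNReal.ofReal_ne_top, lintegral_const_mul' _ _
    ENNReal.ofReal_ne_top, lintegral_gaussianReal hv, lintegral_gaussianReal hv, mul_left_comm]
  · exact mul_le_mul_right key _
  · have := hf'.measurable
    fun_prop
  · exact fun x => div_nonneg (sq_nonneg _) (div_pos (hpos x) hm0).le
  · exact measurable_ent.comp ((hfm.div_const m).prodMk measurable_const)
  · exact fun x => ent_nonneg (div_pos (hpos x) hm0) one_pos

/-! ### Induction on the dimension -/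

open ProbabilityTheory in
/-- The logarithmic Sobolev inequality for the product Gaussian on `Fin d → ℝ`, where `f' i` is the
`i`-th partial derivative of `f`. -/
theorem lsi_pi {v : NNReal} (hv : v ≠ 0) (d : ℕ) :
    ∀ (f : (Fin d → ℝ) → ℝ) (f' : Fin d → (Fin d → ℝ) → ℝ), Continuous f →
      (∀ i, Continuous (f' i)) →
      (∀ x i, HasDerivAt (fun t => f (Function.update x i t)) (f' i x) (x i)) →
      (∀ x, 0 < f x) → Integrable f (Measure.pi fun _ => gaussianReal 0 v) →
      ∫⁻ x, ENNReal.ofReal (ent (f x) (∫ x, f x ∂(Measure.pi fun _ => gaussianReal 0 v)))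
          ∂(Measure.pi fun _ => gaussianReal 0 v) ≤
        ∫⁻ x, ∑ i, ENNReal.ofReal (v / 2) * ENNReal.ofReal (f' i x ^ 2 / f x)
          ∂(Measure.pi fun _ => gaussianReal 0 v) := by
  induction d with
  | zero =>
    intro f f' hf hf' hd hpos hint
    rw [Measure.pi_of_empty]
    simp [ent, (hpos _).ne']
  | succ d ih =>
    intro f f' hf hf' hd hpos hint
    set π₁ : Measure (Fin d → ℝ) := Measure.pi fun _ => gaussianReal 0 v with hπ₁
    set c : ℝ × (Fin d → ℝ) → (Fin (d + 1) → ℝ) := fun z => Fin.cons z.1 z.2 with hc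
    have hmp : MeasurePreserving c ((gaussianReal 0 v).prod π₁)
        (Measure.pi fun _ => gaussianReal 0 v) := by
      have h := (measurePreserving_piFinSuccAbove
        (fun _ : Fin (d + 1) => gaussianReal 0 v) 0).symm
      convert h using 1
      funext z
      simp [hc, MeasurableEquiv.piFinSuccAbove, Fin.insertNthEquiv]
    have hcc : Continuous c := by
      refine continuous_pi fun i => ?_
      refine Fin.cases ?_ (fun j => ?_) i
      · simpa [hc] using continuous_fst
      · simp only [hc, Fin.cons_succ]
        fun_prop
    have hcl : ∀ y, Continuous fun t => c (t, y) := fun y => hcc.comp (by fun_prop)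
    have hcr : ∀ t, Continuous fun y => c (t, y) := fun t => hcc.comp (by fun_prop)
    have hintc : Integrable (fun z => f (c z)) ((gaussianReal 0 v).prod π₁) :=
      hmp.integrable_comp_of_integrable hint
    have hm : ∫ x, f x ∂(Measure.pi fun _ => gaussianReal 0 v) =
        ∫ z, f (c z) ∂((gaussianReal 0 v).prod π₁) := by
      rw [← hmp.map_eq, integral_map hmp.measurable.aemeasurable hf.aestronglyMeasurable]
    have hent : Measurable fun x => ENNReal.ofReal
        (ent (f x) (∫ z, f (c z) ∂((gaussianReal 0 v).prod π₁))) :=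
      (measurable_ent.comp (hf.measurable.prodMk measurable_const)).ennreal_ofReal
    have hrm : ∀ i, Measurable fun x =>
        ENNReal.ofReal (v / 2) * ENNReal.ofReal (f' i x ^ 2 / f x) := fun i => by
      have h1 := (hf' i).measurable
      have h2 := hf.measurable
      fun_prop
    rw [hm, ← hmp.lintegral_comp hent,
      ← hmp.lintegral_comp (Finset.measurable_sum _ fun i _ => hrm i)]
    simp only [Fin.sum_univ_succ]
    have hrm0 : Measurable fun z =>
        ENNReal.ofReal (v / 2) * ENNReal.ofReal (f' 0 (c z) ^ 2 / f (c z)) :=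
      (hrm 0).comp hmp.measurable
    rw [lintegral_add_left hrm0]
    refine ent_tensor (gaussianReal 0 v) π₁ (fun z => f (c z)) (hf.comp hcc).measurable
      (fun z => hpos _) hintc
      (fun z => ENNReal.ofReal (v / 2) * ENNReal.ofReal (f' 0 (c z) ^ 2 / f (c z)))
      (fun z => ∑ i : Fin d,
        ENNReal.ofReal (v / 2) * ENNReal.ofReal (f' i.succ (c z) ^ 2 / f (c z)))
      ((hrm 0).comp hmp.measurable)
      (Finset.measurable_sum _ fun i _ => (hrm i.succ).comp hmp.measurable) ?_ ?_
    · intro y hy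
      rw [lintegral_const_mul' _ _ ENNReal.ofReal_ne_top]
      refine lsi_line hv (fun t => f (c (t, y))) (fun t => f' 0 (c (t, y))) (fun t => ?_)
        ((hf' 0).comp (hcl y)) (fun t => hpos _) hy
      have h := hd (c (t, y)) 0
      simpa only [hc, Fin.update_cons_zero, Fin.cons_zero] using h
    · intro t ht
      refine ih (fun y => f (c (t, y))) (fun i y => f' i.succ (c (t, y))) (hf.comp (hcr t))
        (fun i => (hf' i.succ).comp (hcr t)) (fun y i => ?_) (fun y => hpos _) ht
      have h := hd (c (t, y)) i.succ
      simpa only [hc, ← Fin.cons_update, Fin.cons_succ] using h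

/-! ### Passage to Euclidean space -/

open ProbabilityTheory in
lemma pi_gaussianReal_eq_withDensity {v : NNReal} (hv : v ≠ 0) (d : ℕ) :
    (Measure.pi fun _ : Fin d => gaussianReal 0 v) =
      volume.withDensity fun x => ENNReal.ofReal (∏ i, gaussianPDFReal 0 v (x i)) := by
  refine Measure.pi_eq fun s hs => ?_
  rw [withDensity_apply _ (MeasurableSet.univ_pi hs), volume_pi, Measure.restrict_pi_pi,
    ← ofReal_integral_eq_lintegral_ofReal
      (Integrable.fintype_prod fun i => (integrable_gaussianPDFReal 0 v).restrict)
      (.of_forall fun x => Finset.prod_nonneg fun i _ => gaussianPDFReal_nonneg _ _ _),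
    integral_fintype_prod_eq_prod (fun _ => gaussianPDFReal 0 v),
    ENNReal.ofReal_prod_of_nonneg
      fun i _ => integral_nonneg fun x => gaussianPDFReal_nonneg _ _ _]
  simp only [gaussianReal_apply_eq_integral 0 hv]

open ProbabilityTheory in
lemma prod_gaussianPDFReal (d : ℕ) {v : NNReal} (hv : v ≠ 0) (x : Fin d → ℝ) :
    ∏ i, gaussianPDFReal 0 v (x i) = gaussD d v (WithLp.toLp 2 x) := by
  have hv' : (0 : ℝ) < v := by positivity
  have hA : (0 : ℝ) < 2 * π * v := by positivity
  simp only [gaussianPDFReal, gaussD, Finset.prod_mul_distrib, Finset.prod_const,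
    Finset.card_univ, Fintype.card_fin, ← Real.exp_sum, sub_zero]
  congr 1
  · rw [Real.sqrt_eq_rpow, ← Real.rpow_neg hA.le, ← Real.rpow_natCast, ← Real.rpow_mul hA.le]
    congr 1; ring
  · rw [EuclideanSpace.norm_sq_eq, ← Finset.sum_div, Finset.sum_neg_distrib]
    simp

lemma gaussD_pos (d : ℕ) {v : NNReal} (hv : v ≠ 0) (x : EuclideanSpace ℝ (Fin d)) :
    0 < gaussD d v x := by
  have hv' : (0 : ℝ) < v := by positivity
  unfold gaussD; positivity

lemma contDiff_gaussD (d : ℕ) (v : ℝ) : ContDiff ℝ (⊤ : ℕ∞) (gaussD d v) := by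
  unfold gaussD
  exact contDiff_const.mul (((contDiff_norm_sq ℝ).neg.div_const _).exp)

open ProbabilityTheory in
/-- Integrals against the product Gaussian, transported to Lebesgue measure on Euclidean space. -/
lemma lintegral_pi_gaussianReal (d : ℕ) {v : NNReal} (hv : v ≠ 0)
    {g : EuclideanSpace ℝ (Fin d) → ENNReal} (hg : Measurable g) :
    ∫⁻ x, g (WithLp.toLp 2 x) ∂(Measure.pi fun _ : Fin d => gaussianReal 0 v) =
      ∫⁻ x, g x * ENNReal.ofReal (gaussD d v x) := by
  have hmp := PiLp.volume_preserving_toLp (Fin d)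
  have hgm := (contDiff_gaussD d v).continuous.measurable
  rw [pi_gaussianReal_eq_withDensity hv]
  simp only [prod_gaussianPDFReal d hv]
  have hd : Measurable fun x : Fin d → ℝ => ENNReal.ofReal (gaussD d v (WithLp.toLp 2 x)) :=
    (hgm.comp hmp.measurable).ennreal_ofReal
  have hg' : Measurable fun x : Fin d → ℝ => g (WithLp.toLp 2 x) := hg.comp hmp.measurable
  have hprod : Measurable fun x => g x * ENNReal.ofReal (gaussD d v x) :=
    hg.mul hgm.ennreal_ofReal
  rw [lintegral_withDensity_eq_lintegral_mul _ hd hg']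
  refine Eq.trans (lintegral_congr fun x => ?_) (hmp.lintegral_comp hprod)
  exact mul_comm _ _

/-- Stam–Gross logarithmic Sobolev inequality:
`KL(p ‖ γ_ω) ≤ (ω/2) ∫ ‖∇ log(p/γ_ω)‖² p`. -/
theorem log_sobolev_stam_gross (d : ℕ) (ω : ℝ) (hω : 0 < ω)
    (p : EuclideanSpace ℝ (Fin d) → ℝ)
    (hp_smooth : ContDiff ℝ (⊤ : ℕ∞) p)
    (hp_pos : ∀ x, 0 < p x)
    (hp_prob : ∫ x, p x = 1)
    (hKL : Integrable (fun x => p x * Real.log (p x / gaussD d ω x)))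
    (hFisher : Integrable (fun x =>
      ‖gradient (fun y => Real.log (p y / gaussD d ω y)) x‖ ^ 2 * p x)) :
    ∫ x, p x * Real.log (p x / gaussD d ω x) ≤
      (ω / 2) * ∫ x, ‖gradient (fun y => Real.log (p y / gaussD d ω y)) x‖ ^ 2 * p x := by
  lift ω to NNReal using hω.le with v
  have hv : v ≠ 0 := by rintro rfl; simp at hω
  set γ := gaussD d v with hγ
  have hγpos : ∀ x, 0 < γ x := gaussD_pos d hv
  have hγs : ContDiff ℝ (⊤ : ℕ∞) γ := contDiff_gaussD d v
  set L : EuclideanSpace ℝ (Fin d) → ℝ := fun y => Real.log (p y / γ y) with hL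
  have hqpos : ∀ x, 0 < p x / γ x := fun x => div_pos (hp_pos x) (hγpos x)
  have hLs : ContDiff ℝ (⊤ : ℕ∞) L :=
    (hp_smooth.div hγs fun x => (hγpos x).ne').log fun x => (hqpos x).ne'
  have hLd : Differentiable ℝ L := hLs.differentiable (by simp)
  have hgc : Continuous (gradient L) := by
    unfold gradient
    exact (LinearIsometryEquiv.continuous _).comp (hLs.continuous_fderiv (by simp))
  have hqc : Continuous fun x => p x / γ x :=
    hp_smooth.continuous.div hγs.continuous fun x => (hγpos x).ne'
  have hpi : Integrable p := by
    by_contra h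
    rw [integral_undef h] at hp_prob
    exact zero_ne_one hp_prob
  have hto : Continuous (WithLp.toLp 2 : (Fin d → ℝ) → EuclideanSpace ℝ (Fin d)) :=
    PiLp.continuous_toLp 2 _
  have hpm := hp_smooth.continuous.measurable
  have hγm := hγs.continuous.measurable
  have hqm := hqc.measurable
  -- `p / γ` is a probability density with respect to the Gaussian.
  have hlint : ∫⁻ x, ENNReal.ofReal (p (WithLp.toLp 2 x) / γ (WithLp.toLp 2 x))
      ∂(Measure.pi fun _ : Fin d => ProbabilityTheory.gaussianReal 0 v) = 1 := by
    rw [lintegral_pi_gaussianReal d hv (g := fun x => ENNReal.ofReal (p x / γ x))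
      hqm.ennreal_ofReal]
    have : ∀ x, ENNReal.ofReal (p x / γ x) * ENNReal.ofReal (gaussD d v x) =
        ENNReal.ofReal (p x) := fun x => by
      rw [← ENNReal.ofReal_mul (hqpos x).le, ← hγ, div_mul_cancel₀ _ (hγpos x).ne']
    simp only [this]
    rw [← ofReal_integral_eq_lintegral_ofReal hpi (.of_forall fun x => (hp_pos x).le), hp_prob,
      ENNReal.ofReal_one]
  have hfint : Integrable (fun x => p (WithLp.toLp 2 x) / γ (WithLp.toLp 2 x))
      (Measure.pi fun _ : Fin d => ProbabilityTheory.gaussianReal 0 v) := by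
    refine ⟨(hqc.comp hto).aestronglyMeasurable, ?_⟩
    rw [hasFiniteIntegral_iff_ofReal (.of_forall fun x => (hqpos _).le), hlint]
    exact ENNReal.one_lt_top
  have hfm : ∫ x, p (WithLp.toLp 2 x) / γ (WithLp.toLp 2 x)
      ∂(Measure.pi fun _ : Fin d => ProbabilityTheory.gaussianReal 0 v) = 1 := by
    rw [integral_eq_lintegral_of_nonneg_ae (.of_forall fun x => (hqpos _).le)
      hfint.aestronglyMeasurable, hlint, ENNReal.toReal_one]
  have key := lsi_pi hv d (fun x => p (WithLp.toLp 2 x) / γ (WithLp.toLp 2 x))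
    (fun i x => p (WithLp.toLp 2 x) / γ (WithLp.toLp 2 x) * gradient L (WithLp.toLp 2 x) i)
    (hqc.comp hto)
    (fun i => (hqc.comp hto).mul
      ((EuclideanSpace.proj (𝕜 := ℝ) i).continuous.comp (hgc.comp hto)))
    ?_ (fun x => hqpos _) hfint
  swap
  -- The partial derivatives of `p / γ = exp L` are those of `L` times `p / γ`.
  · intro x i
    have hup : HasDerivAt (fun t => (WithLp.toLp 2 (Function.update x i t) :
        EuclideanSpace ℝ (Fin d))) (EuclideanSpace.single i (1 : ℝ)) (x i) := by
      have h := hasDerivAt_update x i (x i)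
      exact ((PiLp.continuousLinearEquiv 2 ℝ (fun _ : Fin d => ℝ)).symm.hasFDerivAt).comp_hasDerivAt
        (x i) h
    have hg : HasFDerivAt L (InnerProductSpace.toDual ℝ _ (gradient L (WithLp.toLp 2 x)))
        (WithLp.toLp 2 (Function.update x i (x i))) := by
      rw [Function.update_eq_self]
      exact (hLd _).hasGradientAt.hasFDerivAt
    have h := (hg.comp_hasDerivAt (x i) hup).exp
    have hexp : ∀ y, Real.exp (L y) = p y / γ y := fun y => Real.exp_log (hqpos y)
    simpa only [Function.comp_def, hexp, InnerProductSpace.toDual_apply_apply,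
      EuclideanSpace.inner_single_right, Function.update_eq_self, one_mul, map_one,
      conj_trivial] using h
  rw [hfm] at key
  rw [lintegral_pi_gaussianReal d hv (g := fun x => ENNReal.ofReal (ent (p x / γ x) 1))
    (measurable_ent.comp (hqm.prodMk measurable_const)).ennreal_ofReal,
    lintegral_pi_gaussianReal d hv (g := fun x => ∑ i, ENNReal.ofReal (v / 2) *
      ENNReal.ofReal ((p x / γ x * gradient L x i) ^ 2 / (p x / γ x)))] at key
  swap
  · refine Finset.measurable_sum _ fun i _ => ?_
    have : Measurable fun x => gradient L x i :=
      ((EuclideanSpace.proj (𝕜 := ℝ) i).continuous.comp hgc).measurable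
    fun_prop
  have hγlint : ∫⁻ x, ENNReal.ofReal (γ x) = 1 := by
    have h := lintegral_pi_gaussianReal d hv (g := fun _ => 1) measurable_const
    simpa [hγ] using h.symm
  have hγi : Integrable γ := by
    refine ⟨hγs.continuous.aestronglyMeasurable, ?_⟩
    rw [hasFiniteIntegral_iff_ofReal (.of_forall fun x => (hγpos x).le), hγlint]
    exact ENNReal.one_lt_top
  have hγ1 : ∫ x, γ x = 1 := by
    rw [integral_eq_lintegral_of_nonneg_ae (.of_forall fun x => (hγpos x).le)
      hγi.aestronglyMeasurable, hγlint, ENNReal.toReal_one]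
  have e1 : ∀ x, ENNReal.ofReal (ent (p x / γ x) 1) * ENNReal.ofReal (γ x) =
      ENNReal.ofReal (p x * L x - p x + γ x) := fun x => by
    rw [← ENNReal.ofReal_mul (ent_nonneg (hqpos x) one_pos)]
    congr 1
    have := (hγpos x).ne'
    simp only [ent, div_one, hL]
    field_simp
  have e2 : ∀ x, (∑ i, ENNReal.ofReal (v / 2) *
      ENNReal.ofReal ((p x / γ x * gradient L x i) ^ 2 / (p x / γ x))) * ENNReal.ofReal (γ x) =
      ENNReal.ofReal ((v : ℝ) / 2 * (‖gradient L x‖ ^ 2 * p x)) := fun x => by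
    have hn : ∀ i, 0 ≤ (p x / γ x * gradient L x i) ^ 2 / (p x / γ x) := fun i =>
      div_nonneg (sq_nonneg _) (hqpos x).le
    rw [← Finset.mul_sum, ← ENNReal.ofReal_sum_of_nonneg fun i _ => hn i,
      ← ENNReal.ofReal_mul (by positivity), ← ENNReal.ofReal_mul
      (mul_nonneg (by positivity) (Finset.sum_nonneg fun i _ => hn i))]
    congr 1
    have h1 := (hγpos x).ne'
    have h2 := (hp_pos x).ne'
    have h3 : ∀ i, (p x / γ x * gradient L x i) ^ 2 / (p x / γ x) =
        p x / γ x * ‖gradient L x i‖ ^ 2 := fun i => by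
      rw [Real.norm_eq_abs, sq_abs]; field_simp
    simp only [h3]
    rw [← Finset.mul_sum, ← EuclideanSpace.norm_sq_eq]
    field_simp
  have hI : Integrable (fun x => p x * L x - p x + γ x) := (hKL.sub hpi).add hγi
  have hI0 : ∀ x, 0 ≤ p x * L x - p x + γ x := fun x => by
    have h := mul_nonneg (ent_nonneg (hqpos x) one_pos) (hγpos x).le
    have h1 := (hγpos x).ne'
    have h2 : ent (p x / γ x) 1 * γ x = p x * L x - p x + γ x := by
      simp only [ent, div_one, hL]
      field_simp
    rwa [h2] at h
  have hR0 : ∀ x, 0 ≤ (v : ℝ) / 2 * (‖gradient L x‖ ^ 2 * p x) := fun x =>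
    mul_nonneg (half_pos hω).le (mul_nonneg (sq_nonneg _) (hp_pos x).le)
  simp only [← hγ] at key
  simp only [e1, e2] at key
  rw [← ofReal_integral_eq_lintegral_ofReal hI (.of_forall hI0),
    ← ofReal_integral_eq_lintegral_ofReal (hFisher.const_mul _) (.of_forall hR0),
    ENNReal.ofReal_le_ofReal_iff (integral_nonneg hR0), integral_const_mul] at key
  have hs : Integrable (fun x => p x * L x - p x) := hKL.sub hpi
  rw [integral_add hs hγi, integral_sub hKL hpi, hγ1, hp_prob] at key
  linarith
end

section
/- Let p be a probability density on ℝ^d, and define p_ω = p * γ_ω (convolution with the centered Gaussian of covariance ωI). Then d/dω KL(p_ω ‖ γ_ω) = -(1/2) ∫ p_ω(x) ‖∇ log(p_ω(x)/γ_ω(x))‖² dx ≤ -(1/ω) KL(p_ω ‖ γ_ω). -/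
/-!
Write `q_w = p * γ_w`.

**Dissipation.** The density `q_w` solves the heat equation `∂_w q_w = ½ Δ q_w`
(`conv_hasDerivAt_var`), and so does `γ_w`. Jensen's inequality gives `q_w` a Gaussian lower bound
(`le_conv`), so `log (q_w / γ_w)` grows at most quadratically, and for `w` near `ω` the integrand
of the divergence and its `w`-derivative are dominated by a multiple of `(1 + ‖x‖²) q_{3ω}`
(`dominate`, `entDeriv_dom`), which is integrable. Differentiating under the integral and
integrating by parts in each coordinate with an explicit vector field (`integral_entDeriv`) gives
`d/dw KL(q_w ‖ γ_w) = -½ J(w)`, where `J` is the relative Fisher information (`hasDerivAt_kl`).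

**Logarithmic Sobolev inequality.** Only the inequality `KL(q_ω ‖ γ_ω) ≤ (ω / 2) J(ω)` is needed,
and the heat flow itself proves it. By Tweedie's formula (`conv_apply_mul`),
`w ∂ᵢ log (q_w / γ_w) = ((yᵢ p) * γ_w) / q_w`, hence `w² J(w) = ∑ᵢ ∫ ((yᵢ p) * γ_w)² / q_w`. The
semigroup property and Cauchy–Schwarz show that this is nonincreasing in `w` (`post_anti`). Thus
`J(T) ≤ ω² J(ω) / T²` for `T ≥ ω`, and by the dissipation identity
`T ↦ KL(T) - ω² J(ω) / (2T)` is nondecreasing. Convexity of `u log u` bounds `KL(T)` by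
`∫ ‖y‖² p / (2T)` (`kl_le`), so letting `T → ∞` gives the claim (`kl_le_fisher`).
-/

open MeasureTheory Real

/-- Gaussian smoothing `p_ω = p * γ_ω`. -/
noncomputable def gaussConv (d : ℕ) (p : EuclideanSpace ℝ (Fin d) → ℝ)
    (ω : ℝ) (x : EuclideanSpace ℝ (Fin d)) : ℝ :=
  ∫ y, p y * gaussD d ω (x - y)

/-! ### Gaussian densities -/

/-- The Euclidean space `ℝ^d`. -/
abbrev Euc (d : ℕ) := EuclideanSpace ℝ (Fin d)

/-- Convolution of two real functions on `ℝ^d`. -/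
noncomputable def cv {d : ℕ} (a b : Euc d → ℝ) (x : Euc d) : ℝ := ∫ y, a y * b (x - y)

section Gaussian

variable {d : ℕ}

lemma gaussD_pos_s4 {w : ℝ} (hw : 0 < w) (x : Euc d) : 0 < gaussD d w x := by
  unfold gaussD; positivity

@[fun_prop]
lemma gaussD_contDiff (w : ℝ) : ContDiff ℝ 2 (gaussD d w) := by
  unfold gaussD
  have : ContDiff ℝ 2 (fun x : Euc d => ‖x‖ ^ 2) := contDiff_norm_sq ℝ
  fun_prop

@[fun_prop]
lemma gaussD_continuous (w : ℝ) : Continuous (gaussD d w) := (gaussD_contDiff w).continuous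

lemma gaussD_neg (w : ℝ) (x : Euc d) : gaussD d w (-x) = gaussD d w x := by
  simp [gaussD]

lemma integral_gaussD {w : ℝ} (hw : 0 < w) : ∫ x, gaussD d w x = 1 := by
  have h := GaussianFourier.integral_rexp_neg_mul_sq_norm (V := Euc d) (b := 1 / (2 * w))
    (by positivity)
  have e : ∀ x : Euc d, gaussD d w x =
      (2 * Real.pi * w) ^ (-(d : ℝ) / 2) * Real.exp (-(1 / (2 * w)) * ‖x‖ ^ 2) := by
    intro x; unfold gaussD; congr 2; field_simp
  simp_rw [e]
  rw [integral_const_mul, h, finrank_euclideanSpace_fin,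
    show π / (1 / (2 * w)) = 2 * π * w by field_simp,
    ← Real.rpow_add (by positivity)]
  rw [show -(d : ℝ) / 2 + d / 2 = 0 by ring, Real.rpow_zero]

lemma integrable_gaussD {w : ℝ} (hw : 0 < w) : Integrable (gaussD d w) := by
  apply Integrable.of_integral_ne_zero
  rw [integral_gaussD hw]; exact one_ne_zero

lemma gaussD_le {w : ℝ} (hw : 0 < w) (x : Euc d) :
    gaussD d w x ≤ (2 * Real.pi * w) ^ (-(d : ℝ) / 2) := by
  unfold gaussD
  refine mul_le_of_le_one_right (by positivity) (Real.exp_le_one_iff.2 ?_)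
  rw [neg_div]
  exact neg_nonpos.2 (by positivity)

/-- A Gaussian with a polynomial weight is dominated by a Gaussian of larger variance, uniformly
for the variance in a compact interval. -/
lemma gaussD_dom {ω : ℝ} (hω : 0 < ω) : ∃ C, 0 ≤ C ∧ ∀ w ∈ Set.Icc (ω / 2) (3 * ω / 2),
    ∀ u : Euc d, (1 + ‖u‖ ^ 2) * gaussD d w u ≤ C * gaussD d (3 * ω) u := by
  refine ⟨(2 * π * (ω / 2)) ^ (-(d : ℝ) / 2) * (1 + 6 * ω) *
    ((2 * π * (3 * ω)) ^ (-(d : ℝ) / 2))⁻¹, by positivity, ?_⟩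
  rintro w ⟨h1, h2⟩ u
  have hw : 0 < w := by linarith
  unfold gaussD
  have hK : (2 * π * w) ^ (-(d : ℝ) / 2) ≤ (2 * π * (ω / 2)) ^ (-(d : ℝ) / 2) := by
    apply Real.rpow_le_rpow_of_nonpos (by positivity)
    · gcongr
    · have : (0 : ℝ) ≤ d := by positivity
      linarith
  have hpos : (2 * π * (3 * ω)) ^ (-(d : ℝ) / 2) ≠ 0 := by positivity
  have hE : Real.exp (-‖u‖ ^ 2 / (2 * w)) ≤ Real.exp (-‖u‖ ^ 2 / (3 * ω)) := by
    apply Real.exp_le_exp.2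
    rw [neg_div, neg_div, neg_le_neg_iff]
    exact div_le_div_of_nonneg_left (by positivity) (by positivity) (by linarith)
  have hP : 1 + ‖u‖ ^ 2 ≤ (1 + 6 * ω) * Real.exp (‖u‖ ^ 2 / (6 * ω)) := by
    have h3 := Real.add_one_le_exp (‖u‖ ^ 2 / (6 * ω))
    calc 1 + ‖u‖ ^ 2 ≤ (1 + 6 * ω) * (‖u‖ ^ 2 / (6 * ω) + 1) := by
          have h4 : (6 * ω) * (‖u‖ ^ 2 / (6 * ω)) = ‖u‖ ^ 2 := by field_simp
          have h5 : 0 ≤ ‖u‖ ^ 2 / (6 * ω) := by positivity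
          nlinarith
      _ ≤ _ := by gcongr
  have hEE : Real.exp (‖u‖ ^ 2 / (6 * ω)) * Real.exp (-‖u‖ ^ 2 / (3 * ω)) =
      Real.exp (-‖u‖ ^ 2 / (2 * (3 * ω))) := by
    rw [← Real.exp_add]; congr 1; field_simp; ring
  calc (1 + ‖u‖ ^ 2) * ((2 * π * w) ^ (-(d : ℝ) / 2) * Real.exp (-‖u‖ ^ 2 / (2 * w)))
      ≤ ((1 + 6 * ω) * Real.exp (‖u‖ ^ 2 / (6 * ω))) *
        ((2 * π * (ω / 2)) ^ (-(d : ℝ) / 2) * Real.exp (-‖u‖ ^ 2 / (3 * ω))) := by gcongr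
    _ = (2 * π * (ω / 2)) ^ (-(d : ℝ) / 2) * (1 + 6 * ω) *
        (Real.exp (‖u‖ ^ 2 / (6 * ω)) * Real.exp (-‖u‖ ^ 2 / (3 * ω))) := by ring
    _ = _ := by rw [hEE]; field_simp

/-- The domination of `gaussD_dom` at a single variance. -/
lemma gaussD_dom' {w : ℝ} (hw : 0 < w) : ∃ C, 0 ≤ C ∧
    ∀ u : Euc d, (1 + ‖u‖ ^ 2) * gaussD d w u ≤ C * gaussD d (3 * w) u := by
  obtain ⟨C, hC, h⟩ := gaussD_dom (d := d) hw
  exact ⟨C, hC, h w ⟨by linarith, by linarith⟩⟩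

lemma gaussD_weight_bdd {w : ℝ} (hw : 0 < w) : ∃ C, 0 ≤ C ∧
    ∀ u : Euc d, (1 + ‖u‖ ^ 2) * gaussD d w u ≤ C := by
  obtain ⟨C, hC, h⟩ := gaussD_dom' (d := d) hw
  refine ⟨C * (2 * Real.pi * (3 * w)) ^ (-(d : ℝ) / 2), by positivity, fun u => (h u).trans ?_⟩
  gcongr
  exact gaussD_le (by positivity) u

/-- A continuous kernel with quadratic growth relative to a Gaussian is integrable. -/
lemma integrable_of_gauss_bound {k : Euc d → ℝ} (hk : Continuous k) {w C : ℝ} (hw : 0 < w)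
    (hb : ∀ u, |k u| ≤ C * ((1 + ‖u‖ ^ 2) * gaussD d w u)) : Integrable k := by
  obtain ⟨D, hD, h⟩ := gaussD_dom' (d := d) hw
  refine ((integrable_gaussD (d := d) (w := 3 * w) (by positivity)).const_mul (|C| * D)).mono'
    hk.aestronglyMeasurable (.of_forall fun u => ?_)
  have hp : 0 ≤ (1 + ‖u‖ ^ 2) * gaussD d w u := by
    have := gaussD_pos_s4 hw u; positivity
  calc ‖k u‖ ≤ C * ((1 + ‖u‖ ^ 2) * gaussD d w u) := hb u
    _ ≤ |C| * ((1 + ‖u‖ ^ 2) * gaussD d w u) := by gcongr; exact le_abs_self C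
    _ ≤ |C| * (D * gaussD d (3 * w) u) := mul_le_mul_of_nonneg_left (h u) (abs_nonneg C)
    _ = _ := by ring

lemma gaussD_hasFDerivAt (w : ℝ) (u : Euc d) :
    HasFDerivAt (gaussD d w) ((-(gaussD d w u / w)) • innerSL ℝ u) u := by
  unfold gaussD
  have h := (((hasStrictFDerivAt_norm_sq (F := Euc d) u).hasFDerivAt.fun_neg.mul_const
    (2 * w)⁻¹).exp.const_mul ((2 * Real.pi * w) ^ (-(d : ℝ) / 2)))
  simp only [← div_eq_mul_inv] at h
  convert! h using 1
  ext v
  simp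
  ring

/-- The variance derivative of the Gaussian density; the right-hand side is `½ Δ γ_w`. -/
lemma gaussD_hasDerivAt_var {w : ℝ} (hw : 0 < w) (u : Euc d) :
    HasDerivAt (fun w => gaussD d w u)
      ((‖u‖ ^ 2 / (2 * w ^ 2) - d / (2 * w)) * gaussD d w u) w := by
  unfold gaussD
  have h1 : HasDerivAt (fun w : ℝ => 2 * Real.pi * w) (2 * Real.pi) w := by
    simpa using (hasDerivAt_id w).const_mul (2 * Real.pi)
  have h2 := h1.rpow_const (p := -(d : ℝ) / 2) (Or.inl (by positivity))
  have h3 : HasDerivAt (fun w : ℝ => Real.exp (-‖u‖ ^ 2 / (2 * w)))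
      (Real.exp (-‖u‖ ^ 2 / (2 * w)) * (‖u‖ ^ 2 / (2 * w ^ 2))) w := by
    apply HasDerivAt.exp
    have := ((hasDerivAt_id w).const_mul 2).fun_inv (by simpa using hw.ne')
    convert! this.const_mul (-‖u‖ ^ 2) using 1
    simp; field_simp
  convert! h2.mul h3 using 1
  rw [Real.rpow_sub_one (by positivity)]
  field_simp
  ring

end Gaussian

/-! ### Convolution -/

section Convolution

variable {d : ℕ}

lemma cv_integrable {a b : Euc d → ℝ} (ha : Integrable a) (hb : Integrable b) :
    Integrable (cv a b) :=
  ha.integrable_convolution (ContinuousLinearMap.mul ℝ ℝ) hb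

lemma integral_cv {a b : Euc d → ℝ} (ha : Integrable a) (hb : Integrable b) :
    ∫ x, cv a b x = (∫ x, a x) * ∫ x, b x :=
  integral_convolution (ContinuousLinearMap.mul ℝ ℝ) ha hb

lemma cv_integrand {a b : Euc d → ℝ} (ha : Integrable a) (hb : Continuous b) {C : ℝ}
    (hC : ∀ u, |b u| ≤ C) (x : Euc d) : Integrable (fun y => a y * b (x - y)) :=
  ha.mul_bdd (c := C) (by fun_prop) (.of_forall fun y => hC (x - y))

lemma cv_hasFDerivAt {a k : Euc d → ℝ} (ha : Integrable a) (hk : ContDiff ℝ 1 k) {C C' : ℝ}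
    (hC : ∀ u, |k u| ≤ C) (hC' : ∀ u, ‖fderiv ℝ k u‖ ≤ C') (x : Euc d) :
    HasFDerivAt (cv a k) (∫ y, a y • fderiv ℝ k (x - y)) x := by
  have hk' : Continuous (fderiv ℝ k) := hk.continuous_fderiv one_ne_zero
  have hkc := hk.continuous
  refine hasFDerivAt_integral_of_dominated_of_fderiv_le (s := Set.univ)
    (F' := fun x y => a y • fderiv ℝ k (x - y)) (bound := fun y => |a y| * C')
    Filter.univ_mem (.of_forall fun x => (cv_integrand ha hkc hC x).aestronglyMeasurable)
    (cv_integrand ha hkc hC x) ?_ (.of_forall fun y x _ => ?_) (ha.abs.mul_const _)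
    (.of_forall fun y x _ => ?_)
  · exact ha.aestronglyMeasurable.smul (by fun_prop)
  · rw [norm_smul]
    exact mul_le_mul_of_nonneg_left (hC' _) (norm_nonneg _)
  · have h1 : HasFDerivAt k (fderiv ℝ k (x - y)) (x - y) :=
      (hk.differentiable one_ne_zero _).hasFDerivAt
    have h2 : HasFDerivAt (fun x => k (x - y)) (fderiv ℝ k (x - y)) x := by
      simpa using (hasFDerivAt_comp_sub y).2 h1
    exact h2.const_mul (a y)

/-- Partial derivatives of a convolution fall on the smooth factor. -/
lemma cv_fderiv_apply {a k : Euc d → ℝ} (ha : Integrable a) (hk : ContDiff ℝ 1 k) {C C' : ℝ}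
    (hC : ∀ u, |k u| ≤ C) (hC' : ∀ u, ‖fderiv ℝ k u‖ ≤ C') (x v : Euc d) :
    fderiv ℝ (cv a k) x v = cv a (fun u => fderiv ℝ k u v) x := by
  rw [(cv_hasFDerivAt ha hk hC hC' x).fderiv, ContinuousLinearMap.integral_apply]
  · rfl
  · have hk' : Continuous (fderiv ℝ k) := hk.continuous_fderiv one_ne_zero
    refine (ha.abs.mul_const C').mono' (ha.aestronglyMeasurable.smul (by fun_prop))
      (.of_forall fun y => ?_)
    rw [norm_smul]
    exact mul_le_mul_of_nonneg_left (hC' _) (norm_nonneg _)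

/-- Differentiation of a convolution in a parameter of the kernel. -/
lemma cv_hasDerivAt_param {a : Euc d → ℝ} (ha : Integrable a) {k k' : ℝ → Euc d → ℝ}
    {s : Set ℝ} {w C : ℝ} (hs : s ∈ nhds w) (hkc : ∀ᶠ t in nhds w, Continuous (k t))
    (hkc' : Continuous (k' w)) {D : ℝ} (hD : ∀ u, |k w u| ≤ D)
    (hC : ∀ t ∈ s, ∀ u, |k' t u| ≤ C)
    (hd : ∀ t ∈ s, ∀ u, HasDerivAt (fun t => k t u) (k' t u) t) (x : Euc d) :
    HasDerivAt (fun t => cv a (k t) x) (cv a (k' w) x) w := by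
  have hw := mem_of_mem_nhds hs
  refine (hasDerivAt_integral_of_dominated_loc_of_deriv_le (s := s)
    (F' := fun t y => a y * k' t (x - y)) (bound := fun y => |a y| * C)
    hs (hkc.mono fun t ht => ?_) (cv_integrand ha hkc.self_of_nhds hD x)
    (cv_integrand ha hkc' (hC w hw) x).aestronglyMeasurable (.of_forall fun y t ht => ?_)
    (ha.abs.mul_const _) (.of_forall fun y t ht => ?_)).2
  · exact ha.aestronglyMeasurable.mul (by fun_prop)
  · rw [norm_mul]
    exact mul_le_mul_of_nonneg_left (hC t ht _) (norm_nonneg _)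
  · exact (hd t ht (x - y)).const_mul (a y)

lemma cv_const_mul_right (a k : Euc d → ℝ) (c : ℝ) (x : Euc d) :
    cv a (fun u => c * k u) x = c * cv a k x := by
  unfold cv; rw [← integral_const_mul]; congr 1; ext y; ring

lemma abs_cv_le {a k l : Euc d → ℝ} (ha : Integrable a) (ha0 : ∀ x, 0 ≤ a x)
    (hl : Continuous l) {D : ℝ} (hD : ∀ u, |l u| ≤ D)
    (h : ∀ u, |k u| ≤ l u) (x : Euc d) : |cv a k x| ≤ cv a l x := by
  refine norm_integral_le_of_norm_le (f := fun y => a y * k (x - y))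
    (cv_integrand ha hl hD x) (.of_forall fun y => ?_)
  rw [norm_mul, Real.norm_of_nonneg (ha0 y)]
  exact mul_le_mul_of_nonneg_left (h _) (ha0 y)

/-- Cauchy–Schwarz for the measure with density `a * k (x - ·)`. -/
lemma cv_sq_le {a f k : Euc d → ℝ} (ha : Integrable a) (ha0 : ∀ x, 0 ≤ a x)
    (hfa : Integrable (fun y => f y * a y)) (hffa : Integrable (fun y => f y ^ 2 * a y))
    (hk : Continuous k) {C : ℝ} (hC : ∀ u, |k u| ≤ C) (hk0 : ∀ u, 0 ≤ k u) (x : Euc d)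
    (hpos : 0 < cv a k x) :
    cv (fun y => f y * a y) k x ^ 2 / cv a k x ≤ cv (fun y => f y ^ 2 * a y) k x := by
  set q := cv a k x with hq
  set m := cv (fun y => f y * a y) k x with hm
  set n := cv (fun y => f y ^ 2 * a y) k x with hn
  have i0 := cv_integrand ha hk hC x
  have i1 := cv_integrand hfa hk hC x
  have i2 := cv_integrand hffa hk hC x
  -- the variance about the weighted mean `m / q` is nonnegative
  have h : 0 ≤ ∫ y, (f y - m / q) ^ 2 * (a y * k (x - y)) :=
    integral_nonneg fun y => mul_nonneg (sq_nonneg _) (mul_nonneg (ha0 y) (hk0 _))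
  have e (c : ℝ) : ∫ y, (f y - c) ^ 2 * (a y * k (x - y)) = n - 2 * c * m + c ^ 2 * q := by
    simp only [hn, hm, hq, cv]
    have i3 := i1.const_mul (2 * c)
    rw [← integral_const_mul, ← integral_const_mul, ← integral_sub i2 i3,
      ← integral_add (f := fun y => f y ^ 2 * a y * k (x - y) -
        2 * c * (f y * a y * k (x - y))) (i2.sub i3) (i0.const_mul _)]
    congr 1; ext y; ring
  rw [e] at h
  have : n - 2 * (m / q) * m + (m / q) ^ 2 * q = n - m ^ 2 / q := by
    field_simp; ring
  linarith

lemma gaussD_abs_le {w : ℝ} (hw : 0 < w) (u : Euc d) :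
    |gaussD d w u| ≤ (2 * Real.pi * w) ^ (-(d : ℝ) / 2) := by
  rw [abs_of_pos (gaussD_pos_s4 hw u)]; exact gaussD_le hw u

/-- Completing the square in a product of two Gaussian densities. -/
lemma gaussD_mul {w t : ℝ} (hw : 0 < w) (ht : 0 < t) (x y z : Euc d) :
    gaussD d w (z - y) * gaussD d t (x - z) = gaussD d (w + t) (x - y) *
      gaussD d (w * t / (w + t)) (z - (w + t)⁻¹ • (t • y + w • x)) := by
  have e1 : z - (w + t)⁻¹ • (t • y + w • x) = (w + t)⁻¹ • (t • (z - y) - w • (x - z)) := by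
    have : z = (w + t)⁻¹ • ((w + t) • z) := by
      rw [smul_smul, inv_mul_cancel₀ (by positivity), one_smul]
    nth_rw 1 [this]
    rw [← smul_sub]; congr 1; module
  have e2 : x - y = (z - y) + (x - z) := by abel
  rw [e1, e2]
  generalize z - y = a
  generalize x - z = b
  unfold gaussD
  have hc : (2 * π * w) ^ (-(d : ℝ) / 2) * (2 * π * t) ^ (-(d : ℝ) / 2) =
      (2 * π * (w + t)) ^ (-(d : ℝ) / 2) * (2 * π * (w * t / (w + t))) ^ (-(d : ℝ) / 2) := by
    rw [← Real.mul_rpow (by positivity) (by positivity),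
      ← Real.mul_rpow (by positivity) (by positivity)]
    congr 1; field_simp
  have hx : -‖a‖ ^ 2 / (2 * w) + -‖b‖ ^ 2 / (2 * t) = -‖a + b‖ ^ 2 / (2 * (w + t)) +
      -‖(w + t)⁻¹ • (t • a - w • b)‖ ^ 2 / (2 * (w * t / (w + t))) := by
    rw [norm_smul, mul_pow, norm_add_sq_real, norm_sub_sq_real, norm_smul, norm_smul,
      inner_smul_left, inner_smul_right]
    simp only [Real.norm_eq_abs, mul_pow, sq_abs, conj_trivial]
    field_simp
    ring
  rw [mul_mul_mul_comm, hc, ← Real.exp_add, hx, Real.exp_add]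
  ring

/-- The heat semigroup property. -/
lemma cv_cv_gaussD {a : Euc d → ℝ} (ha : Integrable a) {w t : ℝ} (hw : 0 < w) (ht : 0 < t)
    (x : Euc d) : cv (cv a (gaussD d w)) (gaussD d t) x = cv a (gaussD d (w + t)) x := by
  have hint : Integrable (Function.uncurry fun z y : Euc d =>
      a y * gaussD d w (z - y) * gaussD d t (x - z)) (volume.prod volume) := by
    have h1 := ha.convolution_integrand (ContinuousLinearMap.mul ℝ ℝ)
      (integrable_gaussD (d := d) hw)
    refine h1.mul_bdd (c := (2 * Real.pi * t) ^ (-(d : ℝ) / 2)) (by fun_prop)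
      (.of_forall fun z => gaussD_abs_le ht _)
  calc cv (cv a (gaussD d w)) (gaussD d t) x
      = ∫ z, ∫ y, a y * gaussD d w (z - y) * gaussD d t (x - z) := by
        unfold cv; simp_rw [integral_mul_const]
    _ = ∫ y, ∫ z, a y * gaussD d w (z - y) * gaussD d t (x - z) := integral_integral_swap hint
    _ = cv a (gaussD d (w + t)) x := by
        unfold cv
        congr 1; ext y
        simp_rw [mul_assoc, gaussD_mul hw ht]
        rw [integral_const_mul, integral_const_mul,
          integral_sub_right_eq_self (gaussD d (w * t / (w + t))),
          integral_gaussD (by positivity), mul_one]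

end Convolution

/-! ### Smoothing a probability density -/

section Smoothing

variable {d : ℕ}

/-- A continuous probability density on `ℝ^d` with finite second moment. -/
structure IsDens (p : Euc d → ℝ) : Prop where
  cont : Continuous p
  nonneg : ∀ x, 0 ≤ p x
  prob : ∫ x, p x = 1
  mom : Integrable (fun x => ‖x‖ ^ 2 * p x)

/-- The kernel `∂ᵢ γ_w`. -/
noncomputable def kerG (w : ℝ) (i : Fin d) (u : Euc d) : ℝ := -(u i / w) * gaussD d w u

/-- The kernel `∂ᵢ∂ᵢ γ_w`. -/
noncomputable def kerH (w : ℝ) (i : Fin d) (u : Euc d) : ℝ :=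
  (u i ^ 2 / w ^ 2 - 1 / w) * gaussD d w u

lemma abs_apply_le (u : Euc d) (i : Fin d) : |u i| ≤ ‖u‖ := PiLp.norm_apply_le u i

lemma abs_apply_le' (u : Euc d) (i : Fin d) : |u i| ≤ 1 + ‖u‖ ^ 2 := by
  nlinarith [abs_apply_le u i, sq_nonneg (‖u‖ - 1)]

lemma sq_apply_le (u : Euc d) (i : Fin d) : u i ^ 2 ≤ ‖u‖ ^ 2 :=
  sq_le_sq.2 (by rw [abs_norm]; exact abs_apply_le u i)

lemma kerG_contDiff (w : ℝ) (i : Fin d) : ContDiff ℝ 1 (kerG (d := d) w i) := by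
  unfold kerG
  have : ContDiff ℝ 1 (gaussD d w) := (gaussD_contDiff w).of_le (by norm_num)
  fun_prop

@[fun_prop]
lemma kerG_continuous (w : ℝ) (i : Fin d) : Continuous (kerG (d := d) w i) :=
  (kerG_contDiff w i).continuous

@[fun_prop]
lemma kerH_continuous (w : ℝ) (i : Fin d) : Continuous (kerH (d := d) w i) := by
  unfold kerH; fun_prop

lemma kerG_abs_le {w : ℝ} (hw : 0 < w) (i : Fin d) (u : Euc d) :
    |kerG w i u| ≤ 1 / w * ((1 + ‖u‖ ^ 2) * gaussD d w u) := by
  have := gaussD_pos_s4 hw u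
  rw [kerG, abs_mul, abs_of_pos this, abs_neg, abs_div, abs_of_pos hw, ← mul_assoc]
  gcongr
  rw [div_mul_eq_mul_div, one_mul]
  gcongr
  exact abs_apply_le' u i

lemma kerH_abs_le {w : ℝ} (hw : 0 < w) (i : Fin d) (u : Euc d) :
    |kerH w i u| ≤ (1 / w ^ 2 + 1 / w) * ((1 + ‖u‖ ^ 2) * gaussD d w u) := by
  have := gaussD_pos_s4 hw u
  rw [kerH, abs_mul, abs_of_pos this, ← mul_assoc]
  gcongr
  have h1 := sq_apply_le u i
  have h2 : 0 ≤ 1 / w := by positivity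
  have h3 : 0 ≤ 1 / w ^ 2 := by positivity
  have h4 : u i ^ 2 / w ^ 2 = 1 / w ^ 2 * u i ^ 2 := by ring
  rw [h4, abs_le]
  constructor <;> nlinarith [mul_nonneg h3 (sq_nonneg (u i)), mul_nonneg h2 (sq_nonneg ‖u‖),
    mul_nonneg h3 (sq_nonneg ‖u‖), mul_le_mul_of_nonneg_left h1 h3]

lemma fderiv_gaussD_apply (w : ℝ) (i : Fin d) (u : Euc d) :
    fderiv ℝ (gaussD d w) u (EuclideanSpace.single i 1) = kerG w i u := by
  rw [(gaussD_hasFDerivAt w u).fderiv]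
  simp [kerG, EuclideanSpace.inner_single_right]
  ring

lemma kerG_hasFDerivAt (w : ℝ) (i : Fin d) (u : Euc d) :
    HasFDerivAt (kerG w i) ((-(u i / w)) • ((-(gaussD d w u / w)) • innerSL ℝ u) +
      gaussD d w u • ((-(1 / w)) • (EuclideanSpace.proj i : Euc d →L[ℝ] ℝ))) u := by
  unfold kerG
  have h1 : HasFDerivAt (fun u : Euc d => -(u i / w))
      ((-(1 / w)) • (EuclideanSpace.proj i : Euc d →L[ℝ] ℝ)) u := by
    have := ((EuclideanSpace.proj i : Euc d →L[ℝ] ℝ).hasFDerivAt (x := u)).const_mul (-(1 / w))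
    convert! this using 1
    ext v; simp; ring
  exact h1.mul (gaussD_hasFDerivAt w u)

lemma fderiv_kerG_apply (w : ℝ) (i : Fin d) (u : Euc d) :
    fderiv ℝ (kerG w i) u (EuclideanSpace.single i 1) = kerH w i u := by
  rw [(kerG_hasFDerivAt w i u).fderiv]
  simp [kerH, EuclideanSpace.inner_single_right]
  ring

lemma fderiv_gaussD_bdd {w : ℝ} (hw : 0 < w) : ∃ C, ∀ u, ‖fderiv ℝ (gaussD d w) u‖ ≤ C := by
  obtain ⟨C, hC, h⟩ := gaussD_weight_bdd (d := d) hw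
  refine ⟨1 / w * C, fun u => ?_⟩
  have hg := gaussD_pos_s4 hw u
  rw [(gaussD_hasFDerivAt w u).fderiv, norm_smul, norm_neg, innerSL_apply_norm,
    Real.norm_of_nonneg (by positivity)]
  calc gaussD d w u / w * ‖u‖ = 1 / w * (‖u‖ * gaussD d w u) := by ring
    _ ≤ 1 / w * ((1 + ‖u‖ ^ 2) * gaussD d w u) := by
      gcongr; nlinarith [sq_nonneg (‖u‖ - 1)]
    _ ≤ _ := by gcongr; exact h u

lemma fderiv_kerG_bdd {w : ℝ} (hw : 0 < w) (i : Fin d) :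
    ∃ C, ∀ u, ‖fderiv ℝ (kerG (d := d) w i) u‖ ≤ C := by
  obtain ⟨C, hC, h⟩ := gaussD_weight_bdd (d := d) hw
  refine ⟨(1 / w ^ 2 + 1 / w) * C, fun u => ?_⟩
  have hg := gaussD_pos_s4 hw u
  have hp : ‖(EuclideanSpace.proj i : Euc d →L[ℝ] ℝ)‖ ≤ 1 :=
    ContinuousLinearMap.opNorm_le_bound _ zero_le_one fun v => by
      simpa using abs_apply_le v i
  have h1 := abs_apply_le u i
  rw [(kerG_hasFDerivAt w i u).fderiv]
  calc _ ≤ ‖(-(u i / w)) • ((-(gaussD d w u / w)) • innerSL ℝ u)‖ +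
        ‖gaussD d w u • ((-(1 / w)) • (EuclideanSpace.proj i : Euc d →L[ℝ] ℝ))‖ := norm_add_le _ _
    _ ≤ (‖u‖ / w) * (gaussD d w u / w * ‖u‖) + gaussD d w u * (1 / w * 1) := by
      simp only [norm_smul, norm_neg, innerSL_apply_norm, norm_div, Real.norm_eq_abs,
        abs_of_pos hg, abs_of_pos hw, abs_one]
      gcongr
    _ = 1 / w ^ 2 * (‖u‖ ^ 2 * gaussD d w u) + 1 / w * (1 * gaussD d w u) := by
      field_simp
    _ ≤ 1 / w ^ 2 * ((1 + ‖u‖ ^ 2) * gaussD d w u) + 1 / w * ((1 + ‖u‖ ^ 2) * gaussD d w u) := by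
      gcongr
      · linarith
      · nlinarith [sq_nonneg ‖u‖]
    _ = (1 / w ^ 2 + 1 / w) * ((1 + ‖u‖ ^ 2) * gaussD d w u) := by ring
    _ ≤ _ := by gcongr; exact h u

lemma kerG_bdd {w : ℝ} (hw : 0 < w) (i : Fin d) : ∃ C, ∀ u : Euc d, |kerG w i u| ≤ C := by
  obtain ⟨C, hC, h⟩ := gaussD_weight_bdd (d := d) hw
  exact ⟨1 / w * C, fun u => (kerG_abs_le hw i u).trans (by gcongr; exact h u)⟩

lemma kerH_bdd {w : ℝ} (hw : 0 < w) (i : Fin d) : ∃ C, ∀ u : Euc d, |kerH w i u| ≤ C := by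
  obtain ⟨C, hC, h⟩ := gaussD_weight_bdd (d := d) hw
  exact ⟨(1 / w ^ 2 + 1 / w) * C, fun u => (kerH_abs_le hw i u).trans (by gcongr; exact h u)⟩

lemma gaussConv_eq_cv (p : Euc d → ℝ) (w : ℝ) : gaussConv d p w = cv p (gaussD d w) := rfl

variable {p : Euc d → ℝ}

namespace IsDens

lemma integrable (hp : IsDens p) : Integrable p := by
  apply Integrable.of_integral_ne_zero
  rw [hp.prob]; exact one_ne_zero

lemma integrable_apply_mul (hp : IsDens p) (i : Fin d) : Integrable (fun y => y i * p y) := by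
  have := hp.cont
  refine (hp.integrable.add hp.mom).mono' (by fun_prop) (.of_forall fun y => ?_)
  rw [norm_mul, Real.norm_of_nonneg (hp.nonneg y)]
  have := mul_le_mul_of_nonneg_right (abs_apply_le' y i) (hp.nonneg y)
  simp only [Pi.add_apply, Real.norm_eq_abs]
  linarith

lemma integrable_apply_sq_mul (hp : IsDens p) (i : Fin d) :
    Integrable (fun y => y i ^ 2 * p y) := by
  have := hp.cont
  refine hp.mom.mono' (by fun_prop) (.of_forall fun y => ?_)
  rw [norm_mul, Real.norm_of_nonneg (hp.nonneg y), Real.norm_of_nonneg (sq_nonneg _)]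
  exact mul_le_mul_of_nonneg_right (sq_apply_le y i) (hp.nonneg y)

lemma conv_le (hp : IsDens p) {w : ℝ} (hw : 0 < w) (x : Euc d) :
    gaussConv d p w x ≤ (2 * Real.pi * w) ^ (-(d : ℝ) / 2) := by
  calc gaussConv d p w x ≤ ∫ y, p y * (2 * Real.pi * w) ^ (-(d : ℝ) / 2) :=
        integral_mono (cv_integrand hp.integrable (gaussD_continuous w) (gaussD_abs_le hw) x)
          (hp.integrable.mul_const _)
          fun y => mul_le_mul_of_nonneg_left (gaussD_le hw _) (hp.nonneg y)
    _ = _ := by rw [integral_mul_const, hp.prob, one_mul]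

/-- Jensen's inequality for `exp` bounds the smoothed density from below by a Gaussian. -/
lemma le_conv (hp : IsDens p) {w : ℝ} (hw : 0 < w) (x : Euc d) :
    (2 * Real.pi * w) ^ (-(d : ℝ) / 2) *
      Real.exp (-(‖x‖ ^ 2 + ∫ y, ‖y‖ ^ 2 * p y) / w) ≤ gaussConv d p w x := by
  set M := ∫ y, ‖y‖ ^ 2 * p y with hM
  set c := (2 * Real.pi * w) ^ (-(d : ℝ) / 2) * Real.exp (-(‖x‖ ^ 2 + M) / w) with hc
  have hc0 : 0 ≤ c := by positivity
  have hi : Integrable (fun y => p y * c * (1 + M / w) - c / w * (‖y‖ ^ 2 * p y)) :=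
    ((hp.integrable.mul_const c).mul_const _).sub (hp.mom.const_mul _)
  calc c = ∫ y, (p y * c * (1 + M / w) - c / w * (‖y‖ ^ 2 * p y)) := by
        rw [integral_sub ((hp.integrable.mul_const c).mul_const _) (hp.mom.const_mul _),
          integral_mul_const, integral_mul_const, integral_const_mul, hp.prob, ← hM]
        ring
    _ ≤ gaussConv d p w x := by
        refine integral_mono hi
          (cv_integrand hp.integrable (gaussD_continuous w) (gaussD_abs_le hw) x) fun y => ?_
        have h1 : c * (1 + (M - ‖y‖ ^ 2) / w) ≤ gaussD d w (x - y) := by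
          have h2 : 1 + (M - ‖y‖ ^ 2) / w ≤ Real.exp ((M - ‖y‖ ^ 2) / w) := by
            linarith [Real.add_one_le_exp ((M - ‖y‖ ^ 2) / w)]
          calc c * (1 + (M - ‖y‖ ^ 2) / w) ≤ c * Real.exp ((M - ‖y‖ ^ 2) / w) := by gcongr
            _ = (2 * Real.pi * w) ^ (-(d : ℝ) / 2) *
                Real.exp (-(‖x‖ ^ 2 + ‖y‖ ^ 2) / w) := by
              rw [hc, mul_assoc, ← Real.exp_add]; congr 2; ring
            _ ≤ _ := by
              unfold gaussD
              refine mul_le_mul_of_nonneg_left (Real.exp_le_exp.2 ?_) (by positivity)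
              have h3 : ‖x - y‖ ^ 2 ≤ 2 * (‖x‖ ^ 2 + ‖y‖ ^ 2) := by
                have h4 := norm_sub_le x y
                nlinarith [sq_nonneg (‖x‖ - ‖y‖), norm_nonneg (x - y)]
              rw [neg_div, neg_div, neg_le_neg_iff, div_le_div_iff₀ (by positivity) hw]
              nlinarith
        calc _ = p y * (c * (1 + (M - ‖y‖ ^ 2) / w)) := by ring
          _ ≤ _ := mul_le_mul_of_nonneg_left h1 (hp.nonneg y)

lemma conv_pos (hp : IsDens p) {w : ℝ} (hw : 0 < w) (x : Euc d) : 0 < gaussConv d p w x :=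
  lt_of_lt_of_le (by positivity) (hp.le_conv hw x)

/-- The log-ratio grows at most quadratically, by the two-sided bounds `conv_le` and `le_conv`. -/
lemma abs_log_le (hp : IsDens p) {w : ℝ} (hw : 0 < w) (x : Euc d) :
    |Real.log (gaussConv d p w x / gaussD d w x)| ≤ (‖x‖ ^ 2 + ∫ y, ‖y‖ ^ 2 * p y) / w := by
  have hM : 0 ≤ ∫ y, ‖y‖ ^ 2 * p y :=
    integral_nonneg fun y => mul_nonneg (sq_nonneg _) (hp.nonneg y)
  have hq := hp.conv_pos hw x
  have hK : 0 < (2 * Real.pi * w) ^ (-(d : ℝ) / 2) := by positivity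
  have h1 := Real.log_le_log hq (hp.conv_le hw x)
  have h2 := Real.log_le_log (by positivity) (hp.le_conv hw x)
  rw [Real.log_mul hK.ne' (Real.exp_ne_zero _), Real.log_exp, neg_div w] at h2
  have h3 : Real.log (gaussD d w x) =
      Real.log ((2 * Real.pi * w) ^ (-(d : ℝ) / 2)) - ‖x‖ ^ 2 / w / 2 := by
    unfold gaussD
    rw [Real.log_mul hK.ne' (Real.exp_ne_zero _), Real.log_exp]
    ring
  rw [Real.log_div hq.ne' (gaussD_pos_s4 hw x).ne', h3]
  have h4 : 0 ≤ ‖x‖ ^ 2 / w := by positivity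
  have h5 : 0 ≤ (∫ y, ‖y‖ ^ 2 * p y) / w := div_nonneg hM hw.le
  rw [add_div] at h2 ⊢
  rw [abs_le]; constructor <;> linarith

lemma conv_differentiableAt (hp : IsDens p) {w : ℝ} (hw : 0 < w) (x : Euc d) :
    DifferentiableAt ℝ (gaussConv d p w) x := by
  obtain ⟨C, hC⟩ := fderiv_gaussD_bdd (d := d) hw
  exact (cv_hasFDerivAt hp.integrable ((gaussD_contDiff w).of_le (by norm_num))
    (gaussD_abs_le hw) hC x).differentiableAt

lemma fderiv_conv (hp : IsDens p) {w : ℝ} (hw : 0 < w) (x : Euc d) (i : Fin d) :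
    fderiv ℝ (gaussConv d p w) x (EuclideanSpace.single i 1) = cv p (kerG w i) x := by
  obtain ⟨C, hC⟩ := fderiv_gaussD_bdd (d := d) hw
  rw [gaussConv_eq_cv, cv_fderiv_apply hp.integrable ((gaussD_contDiff w).of_le (by norm_num))
    (gaussD_abs_le hw) hC x]
  simp_rw [fderiv_gaussD_apply]

lemma conv_kerG_differentiableAt (hp : IsDens p) {w : ℝ} (hw : 0 < w) (i : Fin d) (x : Euc d) :
    DifferentiableAt ℝ (cv p (kerG w i)) x := by
  obtain ⟨C, hC⟩ := fderiv_kerG_bdd (d := d) hw i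
  obtain ⟨D, hD⟩ := kerG_bdd (d := d) hw i
  exact (cv_hasFDerivAt hp.integrable (kerG_contDiff w i) hD hC x).differentiableAt

lemma fderiv_conv_kerG (hp : IsDens p) {w : ℝ} (hw : 0 < w) (i : Fin d) (x : Euc d) :
    fderiv ℝ (cv p (kerG w i)) x (EuclideanSpace.single i 1) = cv p (kerH w i) x := by
  obtain ⟨C, hC⟩ := fderiv_kerG_bdd (d := d) hw i
  obtain ⟨D, hD⟩ := kerG_bdd (d := d) hw i
  rw [cv_fderiv_apply hp.integrable (kerG_contDiff w i) hD hC x]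
  simp_rw [fderiv_kerG_apply]

/-- The heat equation `∂_w q_w = ½ Δ q_w` for the smoothed density. -/
lemma conv_hasDerivAt_var (hp : IsDens p) {w : ℝ} (hw : 0 < w) (x : Euc d) :
    HasDerivAt (fun w => gaussConv d p w x) (1 / 2 * ∑ i, cv p (kerH w i) x) w := by
  obtain ⟨C, hC, h⟩ := gaussD_dom (d := d) hw
  have hs : Set.Icc (w / 2) (3 * w / 2) ∈ nhds w := Icc_mem_nhds (by linarith) (by linarith)
  have hker : ∀ t : ℝ, 0 < t → ∀ u : Euc d,
      (‖u‖ ^ 2 / (2 * t ^ 2) - d / (2 * t)) * gaussD d t u = 1 / 2 * ∑ i, kerH t i u := by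
    intro t ht u
    simp only [kerH, ← Finset.sum_mul, Finset.sum_sub_distrib, ← Finset.sum_div,
      EuclideanSpace.real_norm_sq_eq u]
    simp
    field_simp
  have key := cv_hasDerivAt_param (a := p) hp.integrable (k := fun w => gaussD d w)
    (k' := fun t u => (‖u‖ ^ 2 / (2 * t ^ 2) - d / (2 * t)) * gaussD d t u) (w := w)
    (C := 1 / 2 * ∑ i : Fin d, (1 / (w / 2) ^ 2 + 1 / (w / 2)) *
      (C * (2 * Real.pi * (3 * w)) ^ (-(d : ℝ) / 2))) hs
    (.of_forall fun t => gaussD_continuous t) (by fun_prop) (gaussD_abs_le hw) ?_ ?_ x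
  · convert! key using 1
    have : (fun u : Euc d => (‖u‖ ^ 2 / (2 * w ^ 2) - d / (2 * w)) * gaussD d w u) =
        fun u => 1 / 2 * ∑ i, kerH w i u := funext (hker w hw)
    rw [this, cv_const_mul_right]
    congr 1
    unfold cv
    simp_rw [Finset.mul_sum]
    rw [integral_finsetSum]
    intro i _
    obtain ⟨D, hD⟩ := kerH_bdd (d := d) hw i
    exact cv_integrand hp.integrable (by fun_prop) hD x
  · intro t ht u
    have ht0 : 0 < t := by linarith [ht.1]
    rw [hker t ht0, abs_mul, abs_of_pos (by norm_num : (0 : ℝ) < 1 / 2)]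
    gcongr
    refine (Finset.abs_sum_le_sum_abs _ _).trans (Finset.sum_le_sum fun i _ => ?_)
    refine (kerH_abs_le ht0 i u).trans ?_
    have h1 : w / 2 ≤ t := ht.1
    have := gaussD_pos_s4 ht0 u
    have h3 : gaussD d (3 * w) u ≤ _ := gaussD_le (by positivity) u
    have h2 := (h t ht u).trans (mul_le_mul_of_nonneg_left h3 hC)
    gcongr
  · intro t ht u
    exact gaussD_hasDerivAt_var (by linarith [ht.1]) u

end IsDens

end Smoothing

/-! ### Dissipation of relative entropy -/

section Dissipation

variable {d : ℕ} {p : Euc d → ℝ}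

/-- The relative score `∂ᵢ log (p_w / γ_w)`. -/
noncomputable def score (p : Euc d → ℝ) (w : ℝ) (i : Fin d) (x : Euc d) : ℝ :=
  cv p (kerG w i) x / gaussConv d p w x + x i / w

/-- The contribution of the `i`-th coordinate to twice the variance derivative of
`p_w log (p_w / γ_w)`. -/
noncomputable def entDeriv (p : Euc d → ℝ) (w : ℝ) (i : Fin d) (x : Euc d) : ℝ :=
  cv p (kerH w i) x * Real.log (gaussConv d p w x / gaussD d w x) + cv p (kerH w i) x +
    gaussConv d p w x / w - gaussConv d p w x * x i ^ 2 / w ^ 2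

namespace IsDens

lemma conv_continuous (hp : IsDens p) {w : ℝ} (hw : 0 < w) : Continuous (gaussConv d p w) :=
  continuous_iff_continuousAt.2 fun x => (hp.conv_differentiableAt hw x).continuousAt

lemma conv_kerG_continuous (hp : IsDens p) {w : ℝ} (hw : 0 < w) (i : Fin d) :
    Continuous (cv p (kerG w i)) :=
  continuous_iff_continuousAt.2 fun x => (hp.conv_kerG_differentiableAt hw i x).continuousAt

lemma log_continuous (hp : IsDens p) {w : ℝ} (hw : 0 < w) :
    Continuous (fun x => Real.log (gaussConv d p w x / gaussD d w x)) :=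
  ((hp.conv_continuous hw).div (gaussD_continuous w) fun x => (gaussD_pos_s4 hw x).ne').log
    fun x => (div_pos (hp.conv_pos hw x) (gaussD_pos_s4 hw x)).ne'

lemma conv_kerH_integrable (hp : IsDens p) {w : ℝ} (hw : 0 < w) (i : Fin d) :
    Integrable (cv p (kerH w i)) :=
  cv_integrable hp.integrable
    (integrable_of_gauss_bound (kerH_continuous w i) hw (kerH_abs_le hw i))

lemma conv_integrable (hp : IsDens p) {w : ℝ} (hw : 0 < w) : Integrable (gaussConv d p w) :=
  cv_integrable hp.integrable (integrable_gaussD hw)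

/-- The smoothed density has a finite second moment. -/
lemma weight_integrable (hp : IsDens p) {w : ℝ} (hw : 0 < w) :
    Integrable (fun x => (1 + ‖x‖ ^ 2) * gaussConv d p w x) := by
  obtain ⟨C, hC, hCb⟩ := gaussD_weight_bdd (d := d) hw
  have hb : ∀ u : Euc d, |‖u‖ ^ 2 * gaussD d w u| ≤ 1 * ((1 + ‖u‖ ^ 2) * gaussD d w u) := by
    intro u
    have := gaussD_pos_s4 hw u
    rw [abs_of_nonneg (by positivity)]
    nlinarith
  have hk : Continuous (fun u : Euc d => ‖u‖ ^ 2 * gaussD d w u) := by fun_prop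
  have h1 := cv_integrable hp.mom (integrable_gaussD (d := d) hw)
  have h2 := cv_integrable hp.integrable (integrable_of_gauss_bound hk hw hb)
  have h3 := hp.conv_integrable hw
  have hqc := hp.conv_continuous hw
  refine ((h3.add (h1.const_mul 2)).add (h2.const_mul 2)).mono' (by fun_prop)
    (.of_forall fun x => ?_)
  have hq := hp.conv_pos hw x
  rw [Real.norm_of_nonneg (by positivity)]
  have i0 := cv_integrand hp.integrable (gaussD_continuous w) (gaussD_abs_le hw) x
  have i1 := cv_integrand hp.mom (gaussD_continuous w) (gaussD_abs_le hw) x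
  have i2 := cv_integrand hp.integrable hk
    (fun u => (hb u).trans (by rw [one_mul]; exact hCb u)) x
  have key : ‖x‖ ^ 2 * gaussConv d p w x ≤ 2 * cv (fun y => ‖y‖ ^ 2 * p y) (gaussD d w) x +
      2 * cv p (fun u => ‖u‖ ^ 2 * gaussD d w u) x := by
    unfold gaussConv cv
    rw [← integral_const_mul, ← integral_const_mul, ← integral_const_mul,
      ← integral_add (i1.const_mul 2) (i2.const_mul 2)]
    refine integral_mono (i0.const_mul _) ((i1.const_mul 2).add (i2.const_mul 2)) fun y => ?_
    have h4 : ‖x‖ ^ 2 ≤ 2 * ‖y‖ ^ 2 + 2 * ‖x - y‖ ^ 2 := by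
      have h5 : ‖x‖ ≤ ‖y‖ + ‖x - y‖ := by
        calc ‖x‖ = ‖y + (x - y)‖ := by congr 1; abel
          _ ≤ _ := norm_add_le _ _
      nlinarith [sq_nonneg (‖y‖ - ‖x - y‖), norm_nonneg x]
    have h6 : 0 ≤ p y * gaussD d w (x - y) := mul_nonneg (hp.nonneg y) (gaussD_pos_s4 hw _).le
    have h7 := mul_le_mul_of_nonneg_right h4 h6
    linarith
  simp only [Pi.add_apply]
  linarith

/-- Convolution with a kernel of quadratic growth relative to `γ_w` is bounded by the density
smoothed at the larger variance `3ω`, uniformly for `w` near `ω`. -/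
lemma abs_cv_dom (hp : IsDens p) {ω : ℝ} (hω : 0 < ω) : ∃ K, 0 ≤ K ∧
    ∀ w ∈ Set.Icc (ω / 2) (3 * ω / 2), ∀ (k : Euc d → ℝ) (D : ℝ), 0 ≤ D →
      (∀ u, |k u| ≤ D * ((1 + ‖u‖ ^ 2) * gaussD d w u)) →
      ∀ x, |cv p k x| ≤ D * K * gaussConv d p (3 * ω) x := by
  obtain ⟨K, hK, h⟩ := gaussD_dom (d := d) hω
  refine ⟨K, hK, fun w hw k D hD hk x => ?_⟩
  rw [gaussConv_eq_cv, ← cv_const_mul_right]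
  refine abs_cv_le (D := |D * K| * (2 * Real.pi * (3 * ω)) ^ (-(d : ℝ) / 2))
    hp.integrable hp.nonneg (by fun_prop) (fun u => ?_) (fun u => ?_) x
  · rw [abs_mul]
    gcongr
    exact gaussD_abs_le (by positivity) u
  · refine (hk u).trans ?_
    rw [mul_assoc]
    exact mul_le_mul_of_nonneg_left (h w hw u) hD

/-- The smoothed density, its derivatives and the log-ratio are dominated uniformly for the
variance in a compact interval. -/
lemma dominate (hp : IsDens p) {ω : ℝ} (hω : 0 < ω) : ∃ C, 0 ≤ C ∧
    ∀ w ∈ Set.Icc (ω / 2) (3 * ω / 2), ∀ x : Euc d,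
      gaussConv d p w x ≤ C * gaussConv d p (3 * ω) x ∧
      (∀ i, |cv p (kerG w i) x| ≤ C * gaussConv d p (3 * ω) x) ∧
      (∀ i, |cv p (kerH w i) x| ≤ C * gaussConv d p (3 * ω) x) ∧
      |Real.log (gaussConv d p w x / gaussD d w x)| ≤ C * (1 + ‖x‖ ^ 2) ∧ 1 / w ≤ C := by
  obtain ⟨K, hK, h⟩ := hp.abs_cv_dom hω
  have hM : 0 ≤ ∫ y, ‖y‖ ^ 2 * p y :=
    integral_nonneg fun y => mul_nonneg (sq_nonneg _) (hp.nonneg y)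
  set M := ∫ y, ‖y‖ ^ 2 * p y with hMdef
  set r := 2 / ω with hr
  have hr0 : 0 < r := by positivity
  have hsum : 0 ≤ K + r * K + (r ^ 2 + r) * K + (1 + M) * r := by positivity
  have a1 : 0 ≤ r * K := by positivity
  have a2 : 0 ≤ (r ^ 2 + r) * K := by positivity
  have a3 : 0 ≤ (1 + M) * r := by positivity
  have a4 : 0 ≤ M * r := by positivity
  refine ⟨K + r * K + (r ^ 2 + r) * K + (1 + M) * r, hsum, fun w hw x => ?_⟩
  have hw1 : ω / 2 ≤ w := hw.1
  have hw0 : 0 < w := by linarith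
  have hwr : 1 / w ≤ r := by
    rw [hr, div_le_div_iff₀ hw0 hω]; linarith
  have hw2 : 1 / w ^ 2 ≤ r ^ 2 := by
    rw [show 1 / w ^ 2 = (1 / w) ^ 2 by ring]; gcongr
  have hQ := (hp.conv_pos (by positivity : 0 < 3 * ω) x).le
  refine ⟨?_, fun i => ?_, fun i => ?_, ?_, ?_⟩
  · refine (le_abs_self _).trans ((h w hw (gaussD d w) 1 zero_le_one (fun u => ?_) x).trans ?_)
    · have := gaussD_pos_s4 hw0 u
      rw [abs_of_pos this]; nlinarith [sq_nonneg ‖u‖]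
    · gcongr; linarith
  · refine (h w hw _ r hr0.le (fun u => (kerG_abs_le hw0 i u).trans ?_) x).trans ?_
    · have := gaussD_pos_s4 hw0 u
      gcongr
    · gcongr; linarith
  · refine (h w hw _ (r ^ 2 + r) (by positivity)
      (fun u => (kerH_abs_le hw0 i u).trans ?_) x).trans ?_
    · have := gaussD_pos_s4 hw0 u
      gcongr
    · gcongr; linarith
  · refine (hp.abs_log_le hw0 x).trans ?_
    rw [← hMdef]
    calc (‖x‖ ^ 2 + M) / w = (‖x‖ ^ 2 + M) * (1 / w) := by ring
      _ ≤ ((1 + M) * (1 + ‖x‖ ^ 2)) * r := by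
        gcongr; nlinarith [mul_nonneg hM (sq_nonneg ‖x‖)]
      _ = (1 + M) * r * (1 + ‖x‖ ^ 2) := by ring
      _ ≤ _ := by gcongr; linarith
  · linarith

/-- The integrable majorant that justifies differentiating the divergence under the integral. -/
lemma entDeriv_dom (hp : IsDens p) {ω : ℝ} (hω : 0 < ω) : ∃ C, 0 ≤ C ∧
    ∀ w ∈ Set.Icc (ω / 2) (3 * ω / 2), ∀ (i : Fin d) (x : Euc d),
      |entDeriv p w i x| ≤ C * ((1 + ‖x‖ ^ 2) * gaussConv d p (3 * ω) x) := by
  obtain ⟨C, hC, h⟩ := hp.dominate hω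
  refine ⟨C * C + C + C * C + C * C ^ 2, by positivity, fun w hw i x => ?_⟩
  obtain ⟨h1, -, h2, h3, h4⟩ := h w hw x
  have hw0 : 0 < w := by linarith [hw.1]
  have hQ := (hp.conv_pos (by positivity : 0 < 3 * ω) x).le
  have hq := (hp.conv_pos hw0 x).le
  set Q := gaussConv d p (3 * ω) x
  set N := 1 + ‖x‖ ^ 2
  have hN : 1 ≤ N := by simp only [N]; nlinarith [sq_nonneg ‖x‖]
  have hxN : x i ^ 2 ≤ N := by have := sq_apply_le x i; simp only [N]; linarith
  have hQN : C * Q ≤ C * (N * Q) := by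
    gcongr; nlinarith
  have hw1 : 0 ≤ 1 / w := by positivity
  have t1 : |cv p (kerH w i) x * Real.log (gaussConv d p w x / gaussD d w x)| ≤
      C * C * (N * Q) := by
    rw [abs_mul]
    calc _ ≤ (C * Q) * (C * N) := mul_le_mul (h2 i) h3 (abs_nonneg _) (by positivity)
      _ = _ := by ring
  have t2 : |gaussConv d p w x / w| ≤ C * C * (N * Q) := by
    rw [abs_of_nonneg (by positivity)]
    calc gaussConv d p w x / w = gaussConv d p w x * (1 / w) := by ring
      _ ≤ (C * (N * Q)) * C := mul_le_mul (h1.trans hQN) h4 hw1 (by positivity)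
      _ = _ := by ring
  have t3 : |gaussConv d p w x * x i ^ 2 / w ^ 2| ≤ C * C ^ 2 * (N * Q) := by
    rw [abs_of_nonneg (by positivity)]
    calc gaussConv d p w x * x i ^ 2 / w ^ 2 = gaussConv d p w x * x i ^ 2 * (1 / w) ^ 2 := by
          ring
      _ ≤ (C * Q * N) * C ^ 2 := by gcongr
      _ = _ := by ring
  unfold entDeriv
  calc _ ≤ |cv p (kerH w i) x * Real.log (gaussConv d p w x / gaussD d w x)| +
        |cv p (kerH w i) x| + |gaussConv d p w x / w| +
        |gaussConv d p w x * x i ^ 2 / w ^ 2| := by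
        refine (abs_sub _ _).trans ?_
        gcongr
        refine (abs_add_le _ _).trans ?_
        gcongr
        exact abs_add_le _ _
    _ ≤ C * C * (N * Q) + C * (N * Q) + C * C * (N * Q) + C * C ^ 2 * (N * Q) := by
        gcongr
        exact (h2 i).trans hQN
    _ = _ := by ring

lemma entDeriv_integrable (hp : IsDens p) {w : ℝ} (hw : 0 < w) (i : Fin d) :
    Integrable (entDeriv p w i) := by
  obtain ⟨C, hC, h⟩ := hp.entDeriv_dom hw
  refine ((hp.weight_integrable (by positivity : 0 < 3 * w)).const_mul C).mono' ?_
    (.of_forall fun x => h w ⟨by linarith, by linarith⟩ i x)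
  have h1 := (hp.conv_kerH_integrable hw i).aestronglyMeasurable
  have h2 := (hp.log_continuous hw).aestronglyMeasurable (μ := volume)
  have h3 := hp.conv_continuous hw
  have h4 : AEStronglyMeasurable (fun x : Euc d => gaussConv d p w x / w) volume := by fun_prop
  have h5 : AEStronglyMeasurable (fun x : Euc d => gaussConv d p w x * x i ^ 2 / w ^ 2) volume := by
    fun_prop
  exact (((h1.mul h2).add h1).add h4).sub h5

lemma log_hasFDerivAt (hp : IsDens p) {w : ℝ} (hw : 0 < w) (x : Euc d) :
    HasFDerivAt (fun x => Real.log (gaussConv d p w x / gaussD d w x))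
      ((gaussConv d p w x)⁻¹ • fderiv ℝ (gaussConv d p w) x -
        (gaussD d w x)⁻¹ • fderiv ℝ (gaussD d w) x) x := by
  have e : (fun x => Real.log (gaussConv d p w x / gaussD d w x)) =
      fun x => Real.log (gaussConv d p w x) - Real.log (gaussD d w x) := by
    ext x; exact Real.log_div (hp.conv_pos hw x).ne' (gaussD_pos_s4 hw x).ne'
  rw [e]
  exact ((hp.conv_differentiableAt hw x).hasFDerivAt.log (hp.conv_pos hw x).ne').sub
    ((gaussD_hasFDerivAt w x).differentiableAt.hasFDerivAt.log (gaussD_pos_s4 hw x).ne')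

lemma fderiv_log (hp : IsDens p) {w : ℝ} (hw : 0 < w) (x : Euc d) (i : Fin d) :
    fderiv ℝ (fun x => Real.log (gaussConv d p w x / gaussD d w x)) x
      (EuclideanSpace.single i 1) = score p w i x := by
  have h1 := (gaussD_pos_s4 hw x).ne'
  have h2 := (hp.conv_pos hw x).ne'
  rw [(hp.log_hasFDerivAt hw x).fderiv]
  simp only [sub_apply, smul_apply, hp.fderiv_conv hw,
    fderiv_gaussD_apply, smul_eq_mul, score, kerG]
  field_simp
  ring

lemma norm_gradient_sq (hp : IsDens p) {w : ℝ} (hw : 0 < w) (x : Euc d) :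
    ‖gradient (fun x => Real.log (gaussConv d p w x / gaussD d w x)) x‖ ^ 2 =
      ∑ i, score p w i x ^ 2 := by
  rw [EuclideanSpace.real_norm_sq_eq]
  refine Finset.sum_congr rfl fun i _ => ?_
  rw [← hp.fderiv_log hw, gradient]
  congr 1
  rw [← InnerProductSpace.toDual_symm_apply, EuclideanSpace.inner_single_right]
  simp

/-- Tweedie's formula: the relative score is the posterior mean divided by the variance. -/
lemma conv_apply_mul (hp : IsDens p) {w : ℝ} (hw : 0 < w) (i : Fin d) (x : Euc d) :
    cv (fun y => y i * p y) (gaussD d w) x = w * (gaussConv d p w x * score p w i x) := by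
  have h2 := (hp.conv_pos hw x).ne'
  obtain ⟨D, hD⟩ := kerG_bdd (d := d) hw i
  have i0 := cv_integrand hp.integrable (gaussD_continuous w) (gaussD_abs_le hw) x
  have i1 := cv_integrand hp.integrable (kerG_continuous w i) hD x
  have e : w * (gaussConv d p w x * score p w i x) =
      w * cv p (kerG w i) x + x i * gaussConv d p w x := by
    unfold score; field_simp
  rw [e]
  unfold gaussConv cv
  rw [← integral_const_mul, ← integral_const_mul, ← integral_add (i1.const_mul _) (i0.const_mul _)]
  congr 1; ext y
  simp only [kerG, PiLp.sub_apply]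
  field_simp
  ring

lemma score_sq_eq (hp : IsDens p) {w : ℝ} (hw : 0 < w) (i : Fin d) (x : Euc d) :
    gaussConv d p w x * score p w i x ^ 2 =
      (w ^ 2)⁻¹ * (cv (fun y => y i * p y) (gaussD d w) x ^ 2 / gaussConv d p w x) := by
  have h2 := (hp.conv_pos hw x).ne'
  rw [hp.conv_apply_mul hw]
  field_simp

/-- By Cauchy–Schwarz the integrand is at most `(yᵢ² p) * γ_w`, which has a finite integral. -/
lemma post_integrable (hp : IsDens p) {w : ℝ} (hw : 0 < w) (i : Fin d) :
    Integrable (fun x => cv (fun y => y i * p y) (gaussD d w) x ^ 2 / gaussConv d p w x) := by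
  refine (cv_integrable (hp.integrable_apply_sq_mul i) (integrable_gaussD hw)).mono' ?_
    (.of_forall fun x => ?_)
  · have h1 := (cv_integrable (hp.integrable_apply_mul i)
      (integrable_gaussD hw)).aestronglyMeasurable
    exact ((h1.aemeasurable.pow_const 2).div
      (hp.conv_continuous hw).aemeasurable).aestronglyMeasurable
  · have hq := hp.conv_pos hw x
    rw [Real.norm_of_nonneg (by positivity)]
    exact cv_sq_le hp.integrable hp.nonneg (hp.integrable_apply_mul i)
      (hp.integrable_apply_sq_mul i) (gaussD_continuous w) (gaussD_abs_le hw)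
      (fun u => (gaussD_pos_s4 hw u).le) x hq

lemma score_sq_integrable (hp : IsDens p) {w : ℝ} (hw : 0 < w) (i : Fin d) :
    Integrable (fun x => gaussConv d p w x * score p w i x ^ 2) := by
  simp_rw [hp.score_sq_eq hw]
  exact (hp.post_integrable hw i).const_mul _

/-- The integration by parts behind the dissipation identity: `entDeriv + p_w * score ^ 2` is the
`i`-th partial derivative of `∂ᵢp_w * log (p_w / γ_w) + ∂ᵢp_w + xᵢ p_w / w`. -/
lemma integral_entDeriv (hp : IsDens p) {w : ℝ} (hw : 0 < w) (i : Fin d) :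
    ∫ x, entDeriv p w i x = -∫ x, gaussConv d p w x * score p w i x ^ 2 := by
  set L : Euc d → ℝ := fun x => Real.log (gaussConv d p w x / gaussD d w x) with hL
  set V : Euc d → ℝ := fun x => cv p (kerG w i) x * L x + cv p (kerG w i) x +
    x i / w * gaussConv d p w x with hV
  have hpr (x : Euc d) : HasFDerivAt (fun x : Euc d => x i / w)
      (w⁻¹ • (EuclideanSpace.proj i : Euc d →L[ℝ] ℝ)) x := by
    have := ((EuclideanSpace.proj i : Euc d →L[ℝ] ℝ).hasFDerivAt (x := x)).const_mul w⁻¹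
    convert! this using 1
    ext v; simp; ring
  have hVd (x : Euc d) := ((((hp.conv_kerG_differentiableAt hw i x).hasFDerivAt.fun_mul
    (hp.log_hasFDerivAt hw x).differentiableAt.hasFDerivAt).fun_add
    (hp.conv_kerG_differentiableAt hw i x).hasFDerivAt).fun_add
    ((hpr x).fun_mul (hp.conv_differentiableAt hw x).hasFDerivAt))
  have hVf (x : Euc d) : fderiv ℝ V x (EuclideanSpace.single i 1) =
      entDeriv p w i x + gaussConv d p w x * score p w i x ^ 2 := by
    have h2 := (hp.conv_pos hw x).ne'
    rw [(hVd x).fderiv]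
    simp only [add_apply, smul_apply,
      hp.fderiv_conv hw, hp.fderiv_conv_kerG hw, hp.fderiv_log hw, smul_eq_mul]
    have hpi : (EuclideanSpace.proj i : Euc d →L[ℝ] ℝ) (EuclideanSpace.single i 1) = 1 := by simp
    simp only [entDeriv, score, hpi]
    field_simp
    ring
  have hVdiff (x : Euc d) : DifferentiableAt ℝ V x := (hVd x).differentiableAt
  have hVc : Continuous V := continuous_iff_continuousAt.2 fun x => (hVdiff x).continuousAt
  have hVint : Integrable V := by
    obtain ⟨C, hC, h⟩ := hp.dominate hw
    refine ((hp.weight_integrable (by positivity : 0 < 3 * w)).const_mul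
      (C * C + C + C * C)).mono' hVc.aestronglyMeasurable (.of_forall fun x => ?_)
    obtain ⟨h1, h2, -, h3, h4⟩ := h w ⟨by linarith, by linarith⟩ x
    have hQ := (hp.conv_pos (by positivity : 0 < 3 * w) x).le
    have hq := (hp.conv_pos hw x).le
    have hx := abs_apply_le' x i
    have hw1 : 0 ≤ 1 / w := by positivity
    set Q := gaussConv d p (3 * w) x
    set N := 1 + ‖x‖ ^ 2 with hN'
    have hN : 1 ≤ N := by rw [hN']; nlinarith [sq_nonneg ‖x‖]
    have hQN : C * Q ≤ C * (N * Q) := by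
      gcongr; nlinarith
    have t1 : |cv p (kerG w i) x * L x| ≤ C * C * (N * Q) := by
      rw [abs_mul]
      calc _ ≤ (C * Q) * (C * N) := mul_le_mul (h2 i) h3 (abs_nonneg _) (by positivity)
        _ = _ := by ring
    have t2 : |x i / w * gaussConv d p w x| ≤ C * C * (N * Q) := by
      rw [abs_mul, abs_div, abs_of_pos hw, abs_of_nonneg hq]
      calc |x i| / w * gaussConv d p w x = |x i| * (1 / w) * gaussConv d p w x := by ring
        _ ≤ N * C * (C * Q) := by gcongr
        _ = _ := by ring
    calc ‖V x‖ ≤ |cv p (kerG w i) x * L x| + |cv p (kerG w i) x| +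
          |x i / w * gaussConv d p w x| := by
          refine (abs_add_le _ _).trans ?_
          gcongr
          exact abs_add_le _ _
      _ ≤ C * C * (N * Q) + C * (N * Q) + C * C * (N * Q) := by
          gcongr
          exact (h2 i).trans hQN
      _ = _ := by ring
  have hint : Integrable (fun x => fderiv ℝ V x (EuclideanSpace.single i 1)) := by
    simp_rw [hVf]
    exact (hp.entDeriv_integrable hw i).add (hp.score_sq_integrable hw i)
  have h0 := integral_mul_fderiv_eq_neg_fderiv_mul_of_integrable (μ := volume)
    (f := fun _ : Euc d => (1 : ℝ)) (g := V) (v := EuclideanSpace.single i 1) (by simp)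
    (by simpa using hint) (by simpa using hVint) (by intros; fun_prop) (fun x _ => hVdiff x)
  simp only [hVf, one_mul, fderiv_fun_const, Pi.zero_apply, zero_apply,
    zero_mul, integral_zero, neg_zero] at h0
  rw [integral_add (hp.entDeriv_integrable hw i) (hp.score_sq_integrable hw i)] at h0
  linarith

/-- The dissipation identity, with the relative Fisher information split into coordinates. -/
lemma hasDerivAt_kl (hp : IsDens p) {ω : ℝ} (hω : 0 < ω) :
    HasDerivAt
      (fun w => ∫ x, gaussConv d p w x * Real.log (gaussConv d p w x / gaussD d w x))
      (-(1 / 2) * ∑ i, ∫ x, gaussConv d p ω x * score p ω i x ^ 2) ω := by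
  obtain ⟨C, hC, h⟩ := hp.entDeriv_dom hω
  obtain ⟨D, hD, hd⟩ := hp.dominate hω
  have hs : Set.Icc (ω / 2) (3 * ω / 2) ∈ nhds ω := Icc_mem_nhds (by linarith) (by linarith)
  have hmem : ω ∈ Set.Icc (ω / 2) (3 * ω / 2) := ⟨by linarith, by linarith⟩
  have hwt := hp.weight_integrable (by positivity : 0 < 3 * ω)
  have key := (hasDerivAt_integral_of_dominated_loc_of_deriv_le (μ := volume)
    (F := fun w x => gaussConv d p w x * Real.log (gaussConv d p w x / gaussD d w x))
    (F' := fun w x => 1 / 2 * ∑ i, entDeriv p w i x) (x₀ := ω)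
    (bound := fun x => 1 / 2 * ∑ _i : Fin d, C * ((1 + ‖x‖ ^ 2) * gaussConv d p (3 * ω) x))
    hs ?_ ?_ ?_ ?_ ?_ ?_).2
  · convert! key using 1
    rw [integral_const_mul, integral_finsetSum _ fun i _ => hp.entDeriv_integrable hω i]
    simp_rw [hp.integral_entDeriv hω]
    rw [Finset.sum_neg_distrib]; ring
  · filter_upwards [lt_mem_nhds hω] with w hw
    exact ((hp.conv_continuous hw).mul (hp.log_continuous hw)).aestronglyMeasurable
  · refine (hwt.const_mul (D * D)).mono'
      ((hp.conv_continuous hω).mul (hp.log_continuous hω)).aestronglyMeasurable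
      (.of_forall fun x => ?_)
    obtain ⟨h1, -, -, h3, -⟩ := hd ω hmem x
    have hQ := (hp.conv_pos (by positivity : 0 < 3 * ω) x).le
    rw [norm_mul, Real.norm_of_nonneg (hp.conv_pos hω x).le]
    calc _ ≤ (D * gaussConv d p (3 * ω) x) * (D * (1 + ‖x‖ ^ 2)) :=
          mul_le_mul h1 h3 (abs_nonneg _) (by positivity)
      _ = _ := by ring
  · exact ((integrable_finsetSum _ fun i _ =>
      hp.entDeriv_integrable hω i).const_mul _).aestronglyMeasurable
  · refine .of_forall fun x w hw => ?_
    rw [norm_mul, Real.norm_of_nonneg (by norm_num)]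
    gcongr
    exact (norm_sum_le _ _).trans (Finset.sum_le_sum fun i _ => h w hw i x)
  · exact (integrable_finsetSum _ fun i _ => hwt.const_mul C).const_mul _
  · refine .of_forall fun x w hw => ?_
    have hw0 : 0 < w := by linarith [hw.1]
    have hq := (hp.conv_pos hw0 x).ne'
    have hg := (gaussD_pos_s4 hw0 x).ne'
    have d1 := hp.conv_hasDerivAt_var hw0 x
    have d2 := gaussD_hasDerivAt_var hw0 x
    have d3 := d1.fun_mul ((d1.fun_div d2 hg).log (div_ne_zero hq hg))
    convert! d3 using 1
    simp only [entDeriv, Finset.sum_add_distrib, Finset.sum_sub_distrib, ← Finset.sum_mul,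
      ← Finset.sum_div, ← Finset.mul_sum, ← EuclideanSpace.real_norm_sq_eq x]
    simp
    field_simp
    ring

end IsDens

end Dissipation

/-! ### Logarithmic Sobolev inequality -/

section LogSobolev

variable {d : ℕ} {p : Euc d → ℝ}

namespace IsDens

/-- The mean square of the posterior mean is nonincreasing along the heat flow: Cauchy–Schwarz
for the transition from time `w` to time `w + t`. -/
lemma post_anti (hp : IsDens p) {w t : ℝ} (hw : 0 < w) (ht : 0 < t) (i : Fin d) :
    ∫ x, cv (fun y => y i * p y) (gaussD d (w + t)) x ^ 2 / gaussConv d p (w + t) x ≤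
      ∫ x, cv (fun y => y i * p y) (gaussD d w) x ^ 2 / gaussConv d p w x := by
  set m : Euc d → ℝ := cv (fun y => y i * p y) (gaussD d w) with hm
  set q := gaussConv d p w with hq
  have hq0 (x : Euc d) : q x ≠ 0 := (hp.conv_pos hw x).ne'
  have e1 : (fun y => m y / q y * q y) = m := by
    ext y; exact div_mul_cancel₀ _ (hq0 y)
  have e2 : (fun y => (m y / q y) ^ 2 * q y) = fun y => m y ^ 2 / q y := by
    ext y; have := hq0 y; field_simp
  have hmi : Integrable m := cv_integrable (hp.integrable_apply_mul i) (integrable_gaussD hw)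
  have hpost : Integrable (fun y => m y ^ 2 / q y) := hp.post_integrable hw i
  calc _ ≤ ∫ x, cv (fun y => m y ^ 2 / q y) (gaussD d t) x := by
        refine integral_mono (hp.post_integrable (by positivity) i)
          (cv_integrable hpost (integrable_gaussD ht)) fun x => ?_
        have eq1 : cv q (gaussD d t) x = gaussConv d p (w + t) x :=
          cv_cv_gaussD hp.integrable hw ht x
        have eq2 : cv m (gaussD d t) x = cv (fun y => y i * p y) (gaussD d (w + t)) x :=
          cv_cv_gaussD (hp.integrable_apply_mul i) hw ht x
        have key := cv_sq_le (a := q) (f := fun y => m y / q y) (k := gaussD d t)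
          (hp.conv_integrable hw) (fun x => (hp.conv_pos hw x).le) (by rw [e1]; exact hmi)
          (by rw [e2]; exact hpost) (gaussD_continuous t) (gaussD_abs_le ht)
          (fun u => (gaussD_pos_s4 ht u).le) x
          (by rw [eq1]; exact hp.conv_pos (by positivity) x)
        rw [e1, e2, eq1, eq2] at key
        exact key
    _ = _ := by rw [integral_cv hpost (integrable_gaussD ht), integral_gaussD ht, mul_one]

lemma integral_apply_mul_gaussD (w : ℝ) (i : Fin d) :
    ∫ u : Euc d, u i * gaussD d w u = 0 := by
  have h := integral_neg_eq_self (fun u : Euc d => u i * gaussD d w u) volume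
  simp only [PiLp.neg_apply, gaussD_neg, neg_mul] at h
  rw [integral_neg] at h
  linarith

/-- Convexity of `u log u` bounds the divergence of a Gaussian mixture by the mean divergence of
its components, which is `E|Y|² / (2w)`. -/
lemma kl_le (hp : IsDens p) {w : ℝ} (hw : 0 < w) :
    ∫ x, gaussConv d p w x * Real.log (gaussConv d p w x / gaussD d w x) ≤
      (∫ y, ‖y‖ ^ 2 * p y) / (2 * w) := by
  obtain ⟨B, hB, hBb⟩ := gaussD_weight_bdd (d := d) hw
  have hkb (i : Fin d) (u : Euc d) :
      |u i * gaussD d w u| ≤ 1 * ((1 + ‖u‖ ^ 2) * gaussD d w u) := by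
    have hg := gaussD_pos_s4 hw u
    rw [abs_mul, abs_of_pos hg, one_mul]
    exact mul_le_mul_of_nonneg_right (abs_apply_le' u i) hg.le
  have hkb' (i : Fin d) (u : Euc d) : |u i * gaussD d w u| ≤ B :=
    (hkb i u).trans (by rw [one_mul]; exact hBb u)
  have hkc (i : Fin d) : Continuous (fun u : Euc d => u i * gaussD d w u) := by fun_prop
  have hki (i : Fin d) : Integrable (fun u : Euc d => u i * gaussD d w u) :=
    integrable_of_gauss_bound (hkc i) hw (hkb i)
  set U : Euc d → ℝ := fun x => 1 / (2 * w) * cv (fun y => ‖y‖ ^ 2 * p y) (gaussD d w) x +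
    ∑ i, 1 / w * cv (fun y => y i * p y) (fun u => u i * gaussD d w u) x with hU
  have iA := cv_integrable hp.mom (integrable_gaussD (d := d) hw)
  have iB (i : Fin d) := cv_integrable (hp.integrable_apply_mul i) (hki i)
  have iS : Integrable (fun x => ∑ i, 1 / w *
      cv (fun y => y i * p y) (fun u => u i * gaussD d w u) x) :=
    integrable_finsetSum _ fun i _ => (iB i).const_mul _
  have hUi : Integrable U := (iA.const_mul _).add iS
  have hUint : ∫ x, U x = (∫ y, ‖y‖ ^ 2 * p y) / (2 * w) := by
    rw [hU, integral_add (iA.const_mul _) iS, integral_const_mul,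
      integral_cv hp.mom (integrable_gaussD hw), integral_gaussD hw,
      integral_finsetSum _ fun i _ => (iB i).const_mul _]
    simp_rw [integral_const_mul, integral_cv (hp.integrable_apply_mul _) (hki _),
      integral_apply_mul_gaussD]
    simp
    ring
  rw [← hUint]
  have hFi : Integrable (fun x => gaussConv d p w x *
      Real.log (gaussConv d p w x / gaussD d w x)) := by
    obtain ⟨D, hD, hd⟩ := hp.dominate hw
    refine ((hp.weight_integrable (by positivity : 0 < 3 * w)).const_mul (D * D)).mono'
      ((hp.conv_continuous hw).mul (hp.log_continuous hw)).aestronglyMeasurable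
      (.of_forall fun x => ?_)
    obtain ⟨h1, -, -, h3, -⟩ := hd w ⟨by linarith, by linarith⟩ x
    have hQ := (hp.conv_pos (by positivity : 0 < 3 * w) x).le
    rw [norm_mul, Real.norm_of_nonneg (hp.conv_pos hw x).le]
    calc _ ≤ (D * gaussConv d p (3 * w) x) * (D * (1 + ‖x‖ ^ 2)) :=
          mul_le_mul h1 h3 (abs_nonneg _) (by positivity)
      _ = _ := by ring
  refine integral_mono hFi hUi fun x => ?_
  have hq := hp.conv_pos hw x
  set q := gaussConv d p w x with hqdef
  set ℓ := Real.log (q / gaussD d w x) with hl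
  have i0 := cv_integrand hp.integrable (gaussD_continuous w) (gaussD_abs_le hw) x
  have i1 := cv_integrand hp.mom (gaussD_continuous w) (gaussD_abs_le hw) x
  have i2 (i : Fin d) := cv_integrand (hp.integrable_apply_mul i) (hkc i) (hkb' i) x
  have i3 : Integrable (fun y => ∑ i, 1 / w * (y i * p y * ((x - y) i * gaussD d w (x - y)))) :=
    integrable_finsetSum _ fun i _ => (i2 i).const_mul _
  have hqe : q = ∫ y, p y * gaussD d w (x - y) := rfl
  have lhs : q * ℓ = ∫ y, (p y * gaussD d w (x - y) * (ℓ + 1) - p y * q) := by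
    rw [integral_sub (i0.mul_const _) (hp.integrable.mul_const _), integral_mul_const,
      integral_mul_const, hp.prob, ← hqe]
    ring
  have rhs : U x = ∫ y, (1 / (2 * w) * (‖y‖ ^ 2 * p y * gaussD d w (x - y)) +
      ∑ i, 1 / w * (y i * p y * ((x - y) i * gaussD d w (x - y)))) := by
    rw [integral_add (i1.const_mul _) i3, integral_const_mul,
      integral_finsetSum _ fun i _ => (i2 i).const_mul _]
    simp_rw [integral_const_mul]
    rfl
  change q * ℓ ≤ U x
  rw [lhs, rhs]
  refine integral_mono ((i0.mul_const _).sub (hp.integrable.mul_const _))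
    ((i1.const_mul _).add i3) fun y => ?_
  have hg := gaussD_pos_s4 hw (x - y)
  have hg0 := gaussD_pos_s4 hw x
  -- the logarithm of a component's likelihood ratio
  have hlog : Real.log (gaussD d w (x - y) / gaussD d w x) =
      1 / (2 * w) * ‖y‖ ^ 2 + ∑ i, 1 / w * (y i * (x - y) i) := by
    have hK : (2 * Real.pi * w) ^ (-(d : ℝ) / 2) ≠ 0 := by positivity
    have hin : ∑ i, 1 / w * (y i * (x - y) i) = 1 / w * inner ℝ (x - y) y := by
      rw [← Finset.mul_sum, PiLp.inner_apply]; simp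
    have hxx : ‖x‖ ^ 2 = ‖x - y‖ ^ 2 + 2 * inner ℝ (x - y) y + ‖y‖ ^ 2 := by
      rw [← norm_add_sq_real, sub_add_cancel]
    unfold gaussD
    rw [mul_div_mul_left _ _ hK, ← Real.exp_sub, Real.log_exp, hin, hxx]
    field_simp
    ring
  -- the tangent-line inequality for `u log u` at `u = q`
  have htan : gaussD d w (x - y) * (ℓ + 1) - q ≤
      gaussD d w (x - y) * Real.log (gaussD d w (x - y) / gaussD d w x) := by
    have h1 := Real.log_le_sub_one_of_pos (div_pos hq hg)
    rw [Real.log_div hq.ne' hg.ne'] at h1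
    have h2 := mul_le_mul_of_nonneg_left h1 hg.le
    have h3 : gaussD d w (x - y) * (q / gaussD d w (x - y) - 1) = q - gaussD d w (x - y) := by
      field_simp
    rw [h3] at h2
    rw [hl, Real.log_div hq.ne' hg0.ne', Real.log_div hg.ne' hg0.ne']
    linarith
  calc p y * gaussD d w (x - y) * (ℓ + 1) - p y * q =
        p y * (gaussD d w (x - y) * (ℓ + 1) - q) := by ring
    _ ≤ p y * (gaussD d w (x - y) * Real.log (gaussD d w (x - y) / gaussD d w x)) :=
        mul_le_mul_of_nonneg_left htan (hp.nonneg y)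
    _ = _ := by
        rw [hlog, mul_add, mul_add, Finset.mul_sum, Finset.mul_sum]
        congr 1
        · ring
        · exact Finset.sum_congr rfl fun i _ => by ring

/-- The logarithmic Sobolev inequality for the smoothed density. With `c = ω² J(ω)`, where `J` is
the relative Fisher information, `T ↦ KL(T) - c / (2T)` is nondecreasing on `[ω, ∞)` and its limit
at infinity is at most `0`. -/
lemma kl_le_fisher (hp : IsDens p) {ω : ℝ} (hω : 0 < ω) :
    ∫ x, gaussConv d p ω x * Real.log (gaussConv d p ω x / gaussD d ω x) ≤
      ω / 2 * ∑ i, ∫ x, gaussConv d p ω x * score p ω i x ^ 2 := by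
  set A : ℝ → ℝ := fun w => ∑ i : Fin d,
    ∫ x, cv (fun y => y i * p y) (gaussD d w) x ^ 2 / gaussConv d p w x with hA
  set KL : ℝ → ℝ :=
    fun w => ∫ x, gaussConv d p w x * Real.log (gaussConv d p w x / gaussD d w x) with hKL
  have hJ (w : ℝ) (hw : 0 < w) :
      ∑ i, ∫ x, gaussConv d p w x * score p w i x ^ 2 = (w ^ 2)⁻¹ * A w := by
    simp_rw [hA, hp.score_sq_eq hw, integral_const_mul, Finset.mul_sum]
  have hA_anti (w : ℝ) (hw : ω < w) : A w ≤ A ω := by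
    refine Finset.sum_le_sum fun i _ => ?_
    have := hp.post_anti hω (sub_pos.2 hw) i
    rwa [add_sub_cancel] at this
  set c := A ω with hc
  have hder (w : ℝ) (hw : 0 < w) :
      HasDerivAt (fun w => KL w - c / 2 * w⁻¹) ((w ^ 2)⁻¹ / 2 * (c - A w)) w := by
    have h1 := hp.hasDerivAt_kl hw
    rw [hJ w hw] at h1
    convert! h1.fun_sub ((hasDerivAt_inv hw.ne').const_mul (c / 2)) using 1
    ring
  have hmono : MonotoneOn (fun w => KL w - c / 2 * w⁻¹) (Set.Ici ω) := by
    refine monotoneOn_of_deriv_nonneg (convex_Ici ω)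
      (fun w hw => (hder w (hω.trans_le hw)).continuousAt.continuousWithinAt)
      (fun w hw => ?_) (fun w hw => ?_)
    · rw [interior_Ici] at hw
      exact (hder w (hω.trans hw)).differentiableAt.differentiableWithinAt
    · rw [interior_Ici] at hw
      rw [(hder w (hω.trans hw)).deriv]
      have := hA_anti w hw
      exact mul_nonneg (by positivity) (by linarith)
  set M := ∫ y, ‖y‖ ^ 2 * p y with hM
  have hbd : ∀ T ∈ Set.Ici ω, KL ω - c / 2 * ω⁻¹ ≤ (M / 2 - c / 2) * T⁻¹ := by
    intro T hT
    have hT0 : 0 < T := hω.trans_le hT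
    have h1 : KL ω - c / 2 * ω⁻¹ ≤ KL T - c / 2 * T⁻¹ := hmono Set.self_mem_Ici hT hT
    have h2 : KL T ≤ M / (2 * T) := hp.kl_le hT0
    have h3 : M / (2 * T) = M / 2 * T⁻¹ := by field_simp
    linarith
  have hlim : Filter.Tendsto (fun T : ℝ => (M / 2 - c / 2) * T⁻¹) Filter.atTop (nhds 0) := by
    simpa using tendsto_inv_atTop_zero.const_mul (M / 2 - c / 2)
  have h0 : KL ω - c / 2 * ω⁻¹ ≤ 0 :=
    ge_of_tendsto hlim ((Filter.eventually_ge_atTop ω).mono hbd)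
  rw [hJ ω hω]
  have h4 : ω / 2 * ((ω ^ 2)⁻¹ * c) = c / 2 * ω⁻¹ := by field_simp
  change KL ω ≤ ω / 2 * ((ω ^ 2)⁻¹ * c)
  linarith

end IsDens

end LogSobolev

/-- `d/dω KL(p_ω‖γ_ω) = -(1/2)∫ p_ω ‖∇log(p_ω/γ_ω)‖² ≤ -(1/ω) KL(p_ω‖γ_ω)`. -/
theorem gaussian_smoothing_kl_dissipation (d : ℕ)
    (p : EuclideanSpace ℝ (Fin d) → ℝ)
    (hp_cont : Continuous p) (hp_nonneg : ∀ x, 0 ≤ p x)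
    (hp_prob : ∫ x, p x = 1)
    (hp_mom : Integrable (fun x => ‖x‖ ^ 2 * p x))
    (hp_ent : Integrable (fun x => p x * Real.log (p x)))
    (ω : ℝ) (hω : 0 < ω) :
    HasDerivAt
      (fun w => ∫ x, gaussConv d p w x * Real.log (gaussConv d p w x / gaussD d w x))
      (-(1 / 2) * ∫ x, gaussConv d p ω x *
        ‖gradient (fun y => Real.log (gaussConv d p ω y / gaussD d ω y)) x‖ ^ 2) ω ∧
    -(1 / 2) * (∫ x, gaussConv d p ω x *
        ‖gradient (fun y => Real.log (gaussConv d p ω y / gaussD d ω y)) x‖ ^ 2) ≤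
      -(1 / ω) *
        ∫ x, gaussConv d p ω x * Real.log (gaussConv d p ω x / gaussD d ω x) := by
  have hp : IsDens p := ⟨hp_cont, hp_nonneg, hp_prob, hp_mom⟩
  have hJ : ∫ x, gaussConv d p ω x *
      ‖gradient (fun y => Real.log (gaussConv d p ω y / gaussD d ω y)) x‖ ^ 2 =
      ∑ i, ∫ x, gaussConv d p ω x * score p ω i x ^ 2 := by
    simp_rw [hp.norm_gradient_sq hω, Finset.mul_sum]
    exact integral_finsetSum _ fun i _ => hp.score_sq_integrable hω i
  rw [hJ]
  refine ⟨hp.hasDerivAt_kl hω, ?_⟩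
  have h := mul_le_mul_of_nonneg_left (hp.kl_le_fisher hω) (by positivity : 0 ≤ 1 / ω)
  have e (J : ℝ) : 1 / ω * (ω / 2 * J) = 1 / 2 * J := by field_simp
  rw [e] at h
  linarith
end
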